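/- Let k be a field, n ≥ 1 and d ≥ 1 natural numbers, and let I be a proper ideal of the polynomial ring k[x_1,…,x_n] generated by polynomials of total degree at most d. If I is prime up to max{(2d)^(2^(3n²+2n)), (2nd)^(n(n+1)²·2^(4n+6))}, then I is a prime ideal. -/

import Mathlib

/-!
The idea is to reduce primality to a finite-dimensional algebra over a function field, and to show
that such an algebra, if it is not a field, has a nonunit of small degree.

The hypothesis passes from `k` to `k(t)` (`prime_up_to_map`), and `I` is contracted from its extension
to `k(t)[x]` (`mem_of_map_mem`), so `k` may be assumed infinite. Two consequences of
Hermann's theorem (`hermann`) on solutions of polynomial linear systems are used. First, an ideal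
that is prime up to a large bound has no zero divisors of small degree modulo it, whatever the
degree of the other factor (`nzd_of_prime_up_to`). Second, if the variables are split into
coefficients `U` and others `y`, relations modulo `I` that are linear over `k[U]` can be chosen with
coefficients of bounded degree (`exists_bounded_relation`).

Let `U` be a maximal set of variables that is algebraically independent modulo `I`. The ring
`L = k(U)[y] / I k(U)[y]` is nonzero and finite-dimensional over `k(U)`, with a basis of monomials.
Its structure constants have numerators of small degree over a common denominator `s` of small
degree. As `s` is not a zero divisor modulo `I`, the ideal `I` is contracted from `k(U)[y]`, so it is
prime as soon as `L` is a field.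

Suppose `L` is not a field, and let `J` be a proper nonzero ideal of `L`. The norm form
`det (∑ Tᵢ vᵢ)` of `L` is a form over `k[U]` with coefficients of small degree, and it is the product
of the determinants of the actions on `J` and on `L / J`. By Gauss's lemma the primitive part of the
determinant form of `L / J` has coefficients of small degree as well. Since `L / J` has smaller
dimension than `L`, counting coefficients gives `α` of small degree, not zero, such that `∑ αᵢ vᵢ`
vanishes in `L / J` to high order at a chosen point of `U`-space (`exists_high_order`). Then the
determinant form at `α` vanishes there to an order larger than its degree, so it is zero
(`exists_zero_detForm`), and `∑ αᵢ vᵢ` is not a unit (`exists_small_nonunit`). In `L` it is a zero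
divisor, and since it is nonzero and of small degree, this contradicts the first consequence of
Hermann's theorem (`isPrime_of_nzd`, `isPrime_of_infinite`). The resulting bound is compared with
the second term of the maximum in `bound_arith`.
-/

/-! ### Degree filtrations and Cramer's rule -/

namespace PrimeBound

open Matrix

/-- A family of predicates `dl t x`, read as: `x` has degree at most `t`, with the formal properties
of a degree filtration on a commutative ring. -/
structure IsDegFilt {R : Type*} [CommRing R] (dl : ℕ → R → Prop) : Prop where
  mono : ∀ {a b x}, a ≤ b → dl a x → dl b x
  zero : dl 0 0
  one : dl 0 1
  add : ∀ {a x y}, dl a x → dl a y → dl a (x + y)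
  neg : ∀ {a x}, dl a x → dl a (-x)
  mul : ∀ {a b x y}, dl a x → dl b y → dl (a + b) (x * y)

namespace IsDegFilt

variable {R : Type*} [CommRing R] {dl : ℕ → R → Prop}

lemma zero' (h : IsDegFilt dl) (a : ℕ) : dl a 0 := h.mono (Nat.zero_le _) h.zero

lemma one' (h : IsDegFilt dl) (a : ℕ) : dl a 1 := h.mono (Nat.zero_le _) h.one

lemma sub (h : IsDegFilt dl) {a : ℕ} {x y : R} (hx : dl a x) (hy : dl a y) : dl a (x - y) := by
  rw [sub_eq_add_neg]
  exact h.add hx (h.neg hy)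

lemma sum (h : IsDegFilt dl) {ι : Type*} {a : ℕ} (s : Finset ι) (f : ι → R)
    (hf : ∀ i ∈ s, dl a (f i)) : dl a (∑ i ∈ s, f i) := by
  classical
  induction s using Finset.induction_on with
  | empty => simpa using h.zero' a
  | insert i s hi ih =>
    rw [Finset.sum_insert hi]
    exact h.add (hf i (by simp)) (ih fun j hj => hf j (by simp [hj]))

lemma prod (h : IsDegFilt dl) {ι : Type*} {a : ℕ} (s : Finset ι) (f : ι → R)
    (hf : ∀ i ∈ s, dl a (f i)) : dl (s.card * a) (∏ i ∈ s, f i) := by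
  classical
  induction s using Finset.induction_on with
  | empty => simpa using h.one
  | insert i s hi ih =>
    rw [Finset.prod_insert hi, Finset.card_insert_of_notMem hi, add_mul, one_mul, add_comm]
    exact h.mul (hf i (by simp)) (ih fun j hj => hf j (by simp [hj]))

lemma det (h : IsDegFilt dl) {α : Type*} [Fintype α] [DecidableEq α] {a : ℕ} (M : Matrix α α R)
    (hM : ∀ i j, dl a (M i j)) : dl (Fintype.card α * a) M.det := by
  rw [Matrix.det_apply]
  refine h.sum _ _ fun σ _ => ?_
  have hp : dl (Fintype.card α * a) (∏ i, M (σ i) i) := by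
    simpa using h.prod Finset.univ (fun i => M (σ i) i) fun i _ => hM _ _
  rcases Int.units_eq_one_or (Equiv.Perm.sign σ) with hs | hs
  · simpa [hs] using hp
  · simpa [hs] using h.neg hp

lemma cramer (h : IsDegFilt dl) {α : Type*} [Fintype α] [DecidableEq α] {a : ℕ}
    (M : Matrix α α R) (b : α → R) (hM : ∀ i j, dl a (M i j)) (hb : ∀ i, dl a (b i)) (i : α) :
    dl (Fintype.card α * a) (M.cramer b i) := by
  rw [Matrix.cramer_apply]
  refine h.det _ fun j l => ?_
  rw [Matrix.updateCol_apply]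
  split_ifs
  · exact hb j
  · exact hM j l

end IsDegFilt

lemma isDegFilt_totalDegree (σ R : Type*) [CommRing R] :
    IsDegFilt (fun t (p : MvPolynomial σ R) => p.totalDegree ≤ t) where
  mono h1 h2 := h2.trans h1
  zero := by simp
  one := by simp
  add h1 h2 := (MvPolynomial.totalDegree_add _ _).trans (max_le h1 h2)
  neg h := by simpa [MvPolynomial.totalDegree_neg] using h
  mul h1 h2 := (MvPolynomial.totalDegree_mul _ _).trans (add_le_add h1 h2)

/-- The degree filtration on `A[T]` that only looks at the coefficients. -/
lemma isDegFilt_coeff {A : Type*} [CommRing A] {dl : ℕ → A → Prop} (h : IsDegFilt dl)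
    (τ : Type*) : IsDegFilt (fun t (p : MvPolynomial τ A) => ∀ γ, dl t (p.coeff γ)) where
  mono h1 h2 γ := h.mono h1 (h2 γ)
  zero γ := by simpa using h.zero
  one γ := by
    classical
    rw [MvPolynomial.coeff_one]
    split_ifs
    · exact h.one
    · exact h.zero
  add h1 h2 γ := by simpa using h.add (h1 γ) (h2 γ)
  neg h1 γ := by simpa using h.neg (h1 γ)
  mul h1 h2 γ := by
    classical
    rw [MvPolynomial.coeff_mul]
    exact h.sum _ _ fun x _ => h.mul (h1 _) (h2 _)

/-- Selection of a maximal nonvanishing minor: the rows `r` span the row space over the fraction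
field, so a vector killed by the rows `r` is killed by the whole matrix. -/
lemma exists_pivot {A : Type*} [CommRing A] [IsDomain A] {ι κ : Type} [Fintype ι] [Fintype κ]
    (Q : Matrix ι κ A) :
    ∃ (N : ℕ) (r : Fin N → ι) (c : Fin N → κ), N ≤ Fintype.card ι ∧ Function.Injective c ∧
      (Q.submatrix r c).det ≠ 0 ∧ ∀ z : κ → A, (∀ a, (Q *ᵥ z) (r a) = 0) → Q *ᵥ z = 0 := by
  classical
  let K := FractionRing A
  have hinj : Function.Injective (algebraMap A K) := IsFractionRing.injective A K
  let M : Matrix ι κ K := Q.map (algebraMap A K)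
  obtain ⟨α, a, ha, hsp, hli⟩ := exists_linearIndependent' K (fun i => M i)
  have : Finite α := Finite.of_injective a ha
  have : Fintype α := Fintype.ofFinite α
  let M1 : Matrix α κ K := M.submatrix a id
  have hrank : M1.rank = Fintype.card α := LinearIndependent.rank_matrix hli
  obtain ⟨β, b, hb, hsp2, hli2⟩ := exists_linearIndependent' K M1.col
  have : Finite β := Finite.of_injective b hb
  have : Fintype β := Fintype.ofFinite β
  have hcard : Fintype.card β = Fintype.card α := by
    rw [linearIndependent_iff_card_eq_finrank_span.mp hli2, Set.finrank, hsp2, ← hrank,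
      Matrix.rank_eq_finrank_span_cols]
  let eα : Fin (Fintype.card α) ≃ α := (Fintype.equivFin α).symm
  let eβ : Fin (Fintype.card α) ≃ β := (finCongr hcard.symm).trans (Fintype.equivFin β).symm
  refine ⟨Fintype.card α, a ∘ eα, b ∘ eβ, Fintype.card_le_of_injective a ha,
    hb.comp eβ.injective, ?_, ?_⟩
  · intro h0
    have h1 : IsUnit (M.submatrix (a ∘ eα) (b ∘ eβ)) := by
      rw [← Matrix.linearIndependent_cols_iff_isUnit]
      have h2 := hli2.comp eβ eβ.injective
      have h3 := h2.map' (LinearEquiv.funCongrLeft K K eα).toLinearMap (LinearEquiv.ker _)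
      exact h3
    rw [Matrix.isUnit_iff_isUnit_det] at h1
    have h2 : (M.submatrix (a ∘ eα) (b ∘ eβ)).det = algebraMap A K 0 := by
      rw [← h0, RingHom.map_det]; rfl
    rw [h2, map_zero] at h1
    exact not_isUnit_zero h1
  · intro z hz
    let ψ : (κ → K) →ₗ[K] K := Fintype.linearCombination K (fun j => algebraMap A K (z j))
    have hψ : ∀ i, ψ (M i) = algebraMap A K ((Q *ᵥ z) i) := by
      intro i
      simp [ψ, Fintype.linearCombination_apply, M, Matrix.mulVec, dotProduct]
    have hle : Submodule.span K (Set.range fun i => M i) ≤ LinearMap.ker ψ := by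
      rw [← hsp, Submodule.span_le]
      rintro _ ⟨x, rfl⟩
      have := hz (eα.symm x)
      simp only [Function.comp, Equiv.apply_symm_apply] at this
      change ψ (M (a x)) = 0
      rw [hψ, this, map_zero]
    funext i
    apply hinj
    have : ψ (M i) = 0 := hle (Submodule.subset_span ⟨i, rfl⟩)
    rw [← hψ, this]; simp

lemma sum_pivot {A : Type*} [CommRing A] {κ : Type} [Fintype κ] [DecidableEq κ] {N : ℕ}
    (c : Fin N → κ) (q : κ → A) (u : Fin N → A) :
    ∑ j, q j * (∑ a, u a • Pi.single (c a) (1 : A)) j = ∑ a, q (c a) * u a := by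
  simp only [Finset.sum_apply, Pi.smul_apply, smul_eq_mul, Finset.mul_sum]
  rw [Finset.sum_comm]
  refine Finset.sum_congr rfl fun a _ => ?_
  rw [Finset.sum_eq_single (c a)]
  · simp
  · intro b _ hb; simp [hb]
  · simp

/-- Cramer's rule with degree control: a linear system that is solvable over the fraction field
has a solution of small degree after scaling the right-hand side by a nonzero `s`. -/
lemma exists_cramer {A : Type*} [CommRing A] [IsDomain A] {dl : ℕ → A → Prop} (h : IsDegFilt dl)
    {ι κ : Type} [Fintype ι] [Fintype κ] (Q : Matrix ι κ A) (b : ι → A) {d : ℕ}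
    (hQ : ∀ i j, dl d (Q i j)) (hb : ∀ i, dl d (b i)) (g : κ → A) (s : A) (hs : s ≠ 0)
    (hg : Q *ᵥ g = s • b) :
    ∃ (s' : A) (x : κ → A), s' ≠ 0 ∧ dl (Fintype.card ι * d) s' ∧
      (∀ j, dl (Fintype.card ι * d) (x j)) ∧ Q *ᵥ x = s' • b := by
  classical
  obtain ⟨N, r, c, hN, hc, hdet, hker⟩ := exists_pivot Q
  have hle : Fintype.card (Fin N) * d ≤ Fintype.card ι * d := by
    simpa using Nat.mul_le_mul_right d hN
  set Q' := Q.submatrix r c with hQ'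
  let x : κ → A := ∑ a, (Q'.cramer (b ∘ r) a) • Pi.single (c a) (1 : A)
  have hx : ∀ a, (Q *ᵥ x) (r a) = Q'.det * b (r a) := by
    intro a
    have := congrFun (Matrix.mulVec_cramer Q' (b ∘ r)) a
    simp only [Pi.smul_apply, Function.comp, smul_eq_mul] at this
    rw [← this]
    exact sum_pivot c (Q (r a)) _
  refine ⟨Q'.det, x, hdet, h.mono hle (h.det _ fun i j => hQ _ _), fun j => ?_, ?_⟩
  · simp only [x, Finset.sum_apply, Pi.smul_apply, smul_eq_mul]
    refine h.sum _ _ fun a _ => ?_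
    have h1 := h.mono hle (h.cramer Q' (b ∘ r) (fun i j => hQ _ _) (fun i => hb _) a)
    rw [Pi.single_apply]
    split_ifs
    · simpa using h1
    · simpa using h.zero' _
  · have h0 : Q *ᵥ (s • x - Q'.det • g) = 0 := by
      apply hker
      intro a
      rw [Matrix.mulVec_sub, Matrix.mulVec_smul, Matrix.mulVec_smul, hg]
      simp only [Pi.sub_apply, Pi.smul_apply, smul_eq_mul, hx]
      ring
    rw [Matrix.mulVec_sub, Matrix.mulVec_smul, Matrix.mulVec_smul, hg, sub_eq_zero] at h0
    funext i
    have := congrFun h0 i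
    simp only [Pi.smul_apply, smul_eq_mul] at this ⊢
    apply mul_left_cancel₀ hs
    rw [this]; ring

end PrimeBound

/-! ### Linear changes of coordinates -/

namespace PrimeBound
open Matrix MvPolynomial

lemma totalDegree_aeval_le {σ τ F : Type*} [CommRing F] (f : σ → MvPolynomial τ F)
    (hf : ∀ i, (f i).totalDegree ≤ 1) (p : MvPolynomial σ F) :
    (aeval f p).totalDegree ≤ p.totalDegree := by
  rw [aeval_def, eval₂_eq]
  refine (totalDegree_finsetSum _ _).trans (Finset.sup_le fun γ hγ => ?_)
  refine (totalDegree_mul _ _).trans ?_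
  rw [algebraMap_eq, totalDegree_C, zero_add]
  refine (totalDegree_finsetProd _ _).trans ?_
  refine le_trans (Finset.sum_le_sum fun i _ => ?_) (le_totalDegree hγ)
  refine (totalDegree_pow _ _).trans ?_
  simpa using Nat.mul_le_mul_left (γ i) (hf i)

/-- The restriction of `p` to the line spanned by `c` has as coefficients the values at `c` of the
homogeneous components of `p`. -/
lemma coeff_aeval_line {σ F : Type*} [CommRing F] (c : σ → F) (p : MvPolynomial σ F) (δ : ℕ) :
    (aeval (fun i => Polynomial.C (c i) * Polynomial.X) p : Polynomial F).coeff δ =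
      eval c (homogeneousComponent δ p) := by
  classical
  induction p using MvPolynomial.induction_on' with
  | monomial γ a =>
    rw [homogeneousComponent_of_mem (isHomogeneous_monomial a rfl : IsHomogeneous _ γ.degree),
      aeval_monomial]
    have : (γ.prod fun i k => (Polynomial.C (c i) * Polynomial.X : Polynomial F) ^ k) =
        Polynomial.C (γ.prod fun i k => c i ^ k) * Polynomial.X ^ γ.degree := by
      simp only [mul_pow, Finsupp.prod, Finset.prod_mul_distrib, map_prod, map_pow]
      rw [Finset.prod_pow_eq_pow_sum]
      rfl
    rw [this, Polynomial.algebraMap_eq, ← mul_assoc, ← map_mul, Polynomial.coeff_C_mul_X_pow]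
    split_ifs <;> simp [eval_monomial]
  | add p q hp hq => simp [hp, hq]

/-- After a linear change of coordinates, a nonzero polynomial over an infinite field becomes monic
(up to a unit) in the first variable. -/
lemma exists_linear_change {F : Type*} [Field F] [Infinite F] {n : ℕ}
    (Δ : MvPolynomial (Fin (n + 1)) F) (hΔ : Δ ≠ 0) :
    ∃ φ : MvPolynomial (Fin (n + 1)) F ≃ₐ[F] MvPolynomial (Fin (n + 1)) F,
      (∀ p, (φ p).totalDegree ≤ p.totalDegree) ∧ (∀ p, (φ.symm p).totalDegree ≤ p.totalDegree) ∧
      IsUnit (finSuccEquiv F n (φ Δ)).leadingCoeff := by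
  classical
  set δ := Δ.totalDegree with hδ
  have htop : homogeneousComponent δ Δ ≠ 0 := by
    obtain ⟨γ, hγ, hdeg⟩ := Finset.exists_mem_eq_sup Δ.support (by simpa using hΔ)
      (fun s => s.sum fun _ e => e)
    intro h0
    have h1 := coeff_homogeneousComponent δ Δ γ
    rw [h0, coeff_zero, if_pos] at h1
    · exact (mem_support_iff.mp hγ) h1.symm
    · rw [hδ, totalDegree, hdeg]; rfl
  -- a direction `c`, with `c 0 ≠ 0`, in which the top homogeneous part does not vanish
  obtain ⟨c, hc⟩ : ∃ c : Fin (n + 1) → F, eval c (homogeneousComponent δ Δ * X 0) ≠ 0 := by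
    by_contra! h
    exact mul_ne_zero htop (X_ne_zero 0) (MvPolynomial.funext fun c => by simpa using h c)
  rw [eval_mul, eval_X] at hc
  have hc0 : c 0 ≠ 0 := right_ne_zero_of_mul hc
  have hc1 := left_ne_zero_of_mul hc
  let f : Fin (n + 1) → MvPolynomial (Fin (n + 1)) F :=
    Fin.cons (C (c 0) * X 0) fun i => X i.succ + C (c i.succ) * X 0
  let f' : Fin (n + 1) → MvPolynomial (Fin (n + 1)) F :=
    Fin.cons (C (c 0)⁻¹ * X 0) fun i => X i.succ - C (c i.succ) * (C (c 0)⁻¹ * X 0)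
  have hl : ∀ (a : F) (i : Fin (n + 1)), (C a * X i : MvPolynomial (Fin (n + 1)) F).totalDegree ≤ 1 := by
    intro a i
    refine (totalDegree_mul _ _).trans ?_
    simp
  have hf : ∀ i, (f i).totalDegree ≤ 1 := by
    intro i
    refine Fin.cases ?_ (fun i => ?_) i
    · simpa [f] using hl _ _
    · simp only [f, Fin.cons_succ]
      exact (totalDegree_add _ _).trans (max_le (by simp) (hl _ _))
  have hf' : ∀ i, (f' i).totalDegree ≤ 1 := by
    intro i
    refine Fin.cases ?_ (fun i => ?_) i
    · simpa only [f', Fin.cons_zero] using hl _ _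
    · simp only [f', Fin.cons_succ]
      refine (totalDegree_sub _ _).trans (max_le (by simp) ?_)
      rw [← mul_assoc, ← map_mul]
      exact hl _ _
  have hcc : (C (c 0) * C (c 0)⁻¹ : MvPolynomial (Fin (n + 1)) F) = 1 := by
    rw [← map_mul, mul_inv_cancel₀ hc0, map_one]
  let φ : MvPolynomial (Fin (n + 1)) F ≃ₐ[F] MvPolynomial (Fin (n + 1)) F :=
    AlgEquiv.ofAlgHom (aeval f) (aeval f')
      (by
        ext i : 1
        refine Fin.cases ?_ (fun i => ?_) i
        · simp only [f, f', AlgHom.comp_apply, aeval_X, Fin.cons_zero, map_mul, algHom_C,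
            algebraMap_eq, AlgHom.id_apply]
          linear_combination X 0 * hcc
        · simp only [f, f', AlgHom.comp_apply, aeval_X, Fin.cons_zero, Fin.cons_succ, map_mul,
            map_sub, algHom_C, algebraMap_eq, AlgHom.id_apply]
          linear_combination (- C (c i.succ) * X 0) * hcc)
      (by
        ext i : 1
        refine Fin.cases ?_ (fun i => ?_) i
        · simp only [f, f', AlgHom.comp_apply, aeval_X, Fin.cons_zero, map_mul, algHom_C,
            algebraMap_eq, AlgHom.id_apply]
          linear_combination X 0 * hcc
        · simp only [f, f', AlgHom.comp_apply, aeval_X, Fin.cons_zero, Fin.cons_succ, map_mul,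
            map_add, algHom_C, algebraMap_eq, AlgHom.id_apply]
          ring)
  have hφd : ∀ p, (φ p).totalDegree ≤ p.totalDegree := fun p => totalDegree_aeval_le f hf p
  refine ⟨φ, hφd, fun p => totalDegree_aeval_le f' hf' p, ?_⟩
  set P := finSuccEquiv F n (φ Δ) with hP
  have hline : ∀ p, Polynomial.map (eval (0 : Fin n → F)) (finSuccEquiv F n (φ p)) =
      aeval (fun i => Polynomial.C (c i) * Polynomial.X) p := by
    intro p
    let ψ : MvPolynomial (Fin (n + 1)) F →ₐ[F] Polynomial F :=
      ((Polynomial.mapAlgHom (aeval (0 : Fin n → F))).comp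
        (finSuccEquiv F n).toAlgHom).comp φ.toAlgHom
    have : ψ = aeval (fun i => Polynomial.C (c i) * Polynomial.X) := by
      ext i : 1
      refine Fin.cases ?_ (fun i => ?_) i
      · simp [ψ, φ, f, finSuccEquiv_apply]
      · simp [ψ, φ, f, finSuccEquiv_apply]
    have h2 := congrArg (fun g => g p) this
    simpa [ψ, Polynomial.coe_mapAlgHom] using h2
  have hcoef : eval (0 : Fin n → F) (P.coeff δ) = eval c (homogeneousComponent δ Δ) := by
    rw [← coeff_aeval_line, ← hline, Polynomial.coeff_map]
  have hne : P.coeff δ ≠ 0 := by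
    intro h0
    rw [h0, map_zero] at hcoef
    exact hc1 hcoef.symm
  have hnat : P.natDegree = δ := by
    refine le_antisymm ?_ (Polynomial.le_natDegree_of_ne_zero hne)
    rw [hP, natDegree_finSuccEquiv]
    exact (degreeOf_le_totalDegree _ _).trans (hφd Δ)
  have hconst := totalDegree_coeff_finSuccEquiv_add_le (φ Δ) δ hne
  rw [← hP] at hconst
  have h0 : (P.coeff δ).totalDegree = 0 := by
    have := hφd Δ
    omega
  rw [Polynomial.leadingCoeff, hnat, totalDegree_eq_zero_iff_eq_C.mp h0]
  refine (IsUnit.mk0 _ ?_).map C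
  intro h1
  rw [totalDegree_eq_zero_iff_eq_C.mp h0, h1] at hne
  simp at hne

end PrimeBound

/-! ### Bounded solutions of linear systems over polynomial rings -/

namespace PrimeBound
open Matrix

/-- The solution `g` of the linear system `Q g = b` is the sum of a solution of degree at most `β`
and a combination of solutions of degree at most `β` of the homogeneous system. -/
def HasBddSol {R : Type*} [CommRing R] (dl : ℕ → R → Prop) (β : ℕ) {ι κ : Type} [Fintype κ]
    (Q : Matrix ι κ R) (b : ι → R) (g : κ → R) : Prop :=
  ∃ g₀ : κ → R, Q *ᵥ g₀ = b ∧ (∀ j, dl β (g₀ j)) ∧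
    g - g₀ ∈ Submodule.span R {z : κ → R | Q *ᵥ z = 0 ∧ ∀ j, dl β (z j)}

lemma HasBddSol.transport {R R' : Type*} [CommRing R] [CommRing R'] (e : R ≃+* R')
    {dl : ℕ → R → Prop} {dl' : ℕ → R' → Prop} {β : ℕ} (hdl : ∀ x, dl' β x → dl β (e.symm x))
    {ι κ : Type} [Fintype κ] (Q : Matrix ι κ R) (b : ι → R) (g : κ → R)
    (h : HasBddSol dl' β (Q.map e) (fun i => e (b i)) (fun j => e (g j))) :
    HasBddSol dl β Q b g := by
  have hmv : ∀ z : κ → R', Q *ᵥ (fun j => e.symm (z j)) = fun i => e.symm ((Q.map e *ᵥ z) i) := by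
    intro z
    funext i
    simp [Matrix.mulVec, dotProduct]
  obtain ⟨g₀, h1, h2, h3⟩ := h
  refine ⟨fun j => e.symm (g₀ j), ?_, fun j => hdl _ (h2 j), ?_⟩
  · rw [hmv, h1]; simp
  · have key : ∀ v ∈ Submodule.span R' {z : κ → R' | Q.map e *ᵥ z = 0 ∧ ∀ j, dl' β (z j)},
        (fun j => e.symm (v j)) ∈
          Submodule.span R {z : κ → R | Q *ᵥ z = 0 ∧ ∀ j, dl β (z j)} := by
      intro v hv
      induction hv using Submodule.span_induction with
      | mem x hx =>
        refine Submodule.subset_span ⟨?_, fun j => hdl _ (hx.2 j)⟩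
        rw [hmv, hx.1]; funext i; simp
      | zero =>
        have h0 : (fun j => e.symm ((0 : κ → R') j)) = 0 := by funext j; simp
        rw [h0]
        exact Submodule.zero_mem _
      | add x y _ _ hx hy =>
        have := Submodule.add_mem _ hx hy
        convert this using 1
        funext j; simp
      | smul a x _ hx =>
        have := Submodule.smul_mem _ (e.symm a) hx
        convert this using 1
        funext j; simp
    have := key _ h3
    convert this using 1
    funext j; simp

lemma exists_quot_natDegree_le {R : Type*} [CommRing R] (Δ g : Polynomial R)
    (hΔ : IsUnit Δ.leadingCoeff) : ∃ q, (g - q * Δ).natDegree ≤ Δ.natDegree := by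
  nontriviality R
  obtain ⟨u, hu⟩ := hΔ
  have hm : (Polynomial.C (↑u⁻¹ : R) * Δ).Monic := by
    rw [Polynomial.Monic, Polynomial.leadingCoeff_C_mul_of_isUnit (Units.isUnit _), ← hu]
    simp
  refine ⟨(g /ₘ (Polynomial.C (↑u⁻¹ : R) * Δ)) * Polynomial.C (↑u⁻¹ : R), ?_⟩
  have h1 := Polynomial.modByMonic_add_div g (Polynomial.C (↑u⁻¹ : R) * Δ)
  have h2 : g - (g /ₘ (Polynomial.C (↑u⁻¹ : R) * Δ)) * Polynomial.C (↑u⁻¹ : R) * Δ =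
      g %ₘ (Polynomial.C (↑u⁻¹ : R) * Δ) := by
    linear_combination -h1
  rw [h2]
  refine (Polynomial.natDegree_modByMonic_le _ hm).trans ?_
  exact Polynomial.natDegree_C_mul_le _ _

/-- Cramer's rule expresses the pivot entries of a solution through the other ones; in the
distinguished variable this bounds their degree. -/
lemma natDegree_pivot_le {R : Type*} [CommRing R] [IsDomain R]
    {ι κ : Type} [Fintype ι] [Fintype κ] (Q : Matrix ι κ (Polynomial R)) (b : ι → Polynomial R)
    (g : κ → Polynomial R) {E : ℕ} (hg : Q *ᵥ g = b) {N : ℕ} (r : Fin N → ι) (c : Fin N → κ)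
    (hc : Function.Injective c) (hdet : (Q.submatrix r c).det ≠ 0)
    (hcb : ∀ a, ((Q.submatrix r c).cramer (b ∘ r) a).natDegree ≤ E)
    (hcQ : ∀ j a, ((Q.submatrix r c).cramer ((fun i => Q i j) ∘ r) a).natDegree ≤ E)
    (hnon : ∀ j, j ∉ Set.range c → (g j).natDegree ≤ (Q.submatrix r c).det.natDegree)
    (a : Fin N) : (g (c a)).natDegree ≤ E := by
  classical
  generalize hQ' : Q.submatrix r c = Q' at *
  let rem : κ → Polynomial R := fun j => if j ∈ Set.range c then 0 else g j
  have hsys : Q' *ᵥ (g ∘ c) = b ∘ r - ∑ j, rem j • ((fun i => Q i j) ∘ r) := by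
    funext x
    have h1 := congrFun hg (r x)
    simp only [Pi.sub_apply, Function.comp, Finset.sum_apply, Pi.smul_apply, smul_eq_mul]
    rw [eq_sub_iff_add_eq, ← h1]
    have e1 : (Q' *ᵥ (g ∘ c)) x = ∑ j ∈ Finset.univ.image c, Q (r x) j * g j := by
      rw [Finset.sum_image (fun _ _ _ _ h => hc h), ← hQ']
      rfl
    have e2 : ∑ j, rem j * Q (r x) j = ∑ j ∈ (Finset.univ.image c)ᶜ, Q (r x) j * g j := by
      rw [← Finset.sum_add_sum_compl (Finset.univ.image c), Finset.sum_eq_zero, zero_add]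
      · refine Finset.sum_congr rfl fun j hj => ?_
        have : j ∉ Set.range c := by simpa using hj
        simp only [rem, this, if_false]
        ring
      · intro j hj
        have : j ∈ Set.range c := by simpa using hj
        simp only [rem, this, if_true, zero_mul]
    have e3 : (Q *ᵥ g) (r x) = ∑ j, Q (r x) j * g j := rfl
    rw [e1, e2, e3, Finset.sum_add_sum_compl]
  have hcram : Q'.det * g (c a) = Q'.cramer (b ∘ r) a -
      ∑ j, rem j * Q'.cramer ((fun i => Q i j) ∘ r) a := by
    have h1 : Q'.cramer (Q' *ᵥ (g ∘ c)) a = Q'.det * g (c a) := by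
      rw [Matrix.cramer_eq_adjugate_mulVec, Matrix.mulVec_mulVec, Matrix.adjugate_mul,
        Matrix.smul_mulVec, Matrix.one_mulVec]
      rfl
    rw [← h1, hsys, map_sub, map_sum]
    simp only [Pi.sub_apply, Finset.sum_apply, map_smul, Pi.smul_apply, smul_eq_mul]
  by_cases h0 : g (c a) = 0
  · simp [h0]
  have hdeg : (Q'.det * g (c a)).natDegree ≤ Q'.det.natDegree + E := by
    rw [hcram]
    refine (Polynomial.natDegree_sub_le _ _).trans (max_le ?_ ?_)
    · exact (hcb a).trans (Nat.le_add_left _ _)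
    · refine Polynomial.natDegree_sum_le_of_forall_le _ _ fun j _ => ?_
      refine Polynomial.natDegree_mul_le.trans (add_le_add ?_ (hcQ j a))
      by_cases hj : j ∈ Set.range c
      · simp only [rem, hj, if_true, Polynomial.natDegree_zero, Nat.zero_le]
      · simp only [rem, hj, if_false]
        exact hnon j hj
  rw [Polynomial.natDegree_mul hdet h0] at hdeg
  omega

/-- Reduction modulo the Cramer solutions: modulo combinations of homogeneous solutions of small
degree, any solution has small degree in the distinguished variable. -/
lemma exists_reduced {R : Type*} [CommRing R] [IsDomain R] {dl : ℕ → Polynomial R → Prop}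
    (hdl : IsDegFilt dl) (hnat : ∀ t q, dl t q → q.natDegree ≤ t)
    {ι κ : Type} [Fintype ι] [Fintype κ] (Q : Matrix ι κ (Polynomial R)) (b : ι → Polynomial R)
    (g : κ → Polynomial R) {m d : ℕ} (hQ : ∀ i j, dl d (Q i j)) (hb : ∀ i, dl d (b i))
    (hg : Q *ᵥ g = b) {N : ℕ} (r : Fin N → ι) (c : Fin N → κ) (hN : N ≤ m)
    (hc : Function.Injective c) (hdet : IsUnit (Q.submatrix r c).det.leadingCoeff)
    (hker : ∀ z : κ → Polynomial R, (∀ a, (Q *ᵥ z) (r a) = 0) → Q *ᵥ z = 0) :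
    ∃ g' : κ → Polynomial R, Q *ᵥ g' = b ∧ (∀ j, (g' j).natDegree ≤ m * d) ∧
      g - g' ∈ Submodule.span (Polynomial R)
        {z : κ → Polynomial R | Q *ᵥ z = 0 ∧ ∀ j, dl (m * d) (z j)} := by
  classical
  have hle : Fintype.card (Fin N) * d ≤ m * d := by
    simpa using Nat.mul_le_mul_right d hN
  set Q' := Q.submatrix r c with hQ'
  set Δ := Q'.det with hΔ
  have hΔ0 : Δ ≠ 0 := by
    intro h0
    rw [h0, Polynomial.leadingCoeff_zero] at hdet
    exact not_isUnit_zero hdet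
  have hΔd : dl (m * d) Δ := hdl.mono hle (hdl.det _ fun i j => hQ _ _)
  have hcr : ∀ (v : ι → Polynomial R), (∀ i, dl d (v i)) → ∀ a,
      dl (m * d) (Q'.cramer (v ∘ r) a) := fun v hv a =>
    hdl.mono hle (hdl.cramer Q' (v ∘ r) (fun i j => hQ _ _) (fun i => hv _) a)
  let z : κ → κ → Polynomial R := fun j =>
    Δ • Pi.single j 1 - ∑ a, (Q'.cramer ((fun i => Q i j) ∘ r) a) • Pi.single (c a) 1
  have hz0 : ∀ j, Q *ᵥ z j = 0 := by
    intro j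
    apply hker
    intro a
    have h1 := congrFun (Matrix.mulVec_cramer Q' ((fun i => Q i j) ∘ r)) a
    simp only [Pi.smul_apply, Function.comp, smul_eq_mul] at h1
    simp only [z, Matrix.mulVec_sub, Matrix.mulVec_smul, Pi.sub_apply, Pi.smul_apply, smul_eq_mul,
      Matrix.mulVec_single_one, Matrix.col_apply]
    rw [← h1, sub_eq_zero]
    exact (sum_pivot c (Q (r a)) _).symm
  have hzd : ∀ j l, dl (m * d) (z j l) := by
    intro j l
    simp only [z, Pi.sub_apply, Pi.smul_apply, Finset.sum_apply, smul_eq_mul]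
    refine hdl.sub ?_ (hdl.sum _ _ fun a _ => ?_)
    · rw [Pi.single_apply]
      split_ifs
      · simpa using hΔd
      · simpa using hdl.zero' _
    · rw [Pi.single_apply]
      split_ifs
      · simpa using hcr _ (fun i => hQ i j) a
      · simpa using hdl.zero' _
  choose q hq using fun j => exists_quot_natDegree_le Δ (g j) hdet
  let g' : κ → Polynomial R := g - ∑ j, q j • z j
  have hg' : Q *ᵥ g' = b := by
    simp only [g', Matrix.mulVec_sub, hg, Matrix.mulVec_sum, Matrix.mulVec_smul, hz0, smul_zero,
      Finset.sum_const_zero, sub_zero]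
  have hδ : Δ.natDegree ≤ m * d := hnat _ _ hΔd
  have hnonpiv : ∀ j, j ∉ Set.range c → (g' j).natDegree ≤ Δ.natDegree := by
    intro j hj
    have : g' j = g j - q j * Δ := by
      simp only [g', z, Pi.sub_apply, Finset.sum_apply, Pi.smul_apply, smul_eq_mul]
      congr 1
      rw [Finset.sum_eq_single j]
      · have h0 : ∀ a, (Pi.single (c a) (1 : Polynomial R) : κ → Polynomial R) j = 0 := by
          intro a
          rw [Pi.single_apply, if_neg]
          rintro rfl
          exact hj ⟨a, rfl⟩
        simp [h0]
      · intro l _ hl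
        have h0 : ∀ a, (Pi.single (c a) (1 : Polynomial R) : κ → Polynomial R) j = 0 := by
          intro a
          rw [Pi.single_apply, if_neg]
          rintro rfl
          exact hj ⟨a, rfl⟩
        simp [h0, hl.symm]
      · simp
    rw [this]
    exact hq j
  refine ⟨g', hg', fun j => ?_, ?_⟩
  · by_cases hj : j ∈ Set.range c
    · obtain ⟨a, rfl⟩ := hj
      exact natDegree_pivot_le Q b g' hg' r c hc hΔ0 (fun a => hnat _ _ (hcr b hb a))
        (fun j a => hnat _ _ (hcr _ (fun i => hQ i j) a)) hnonpiv a
    · exact (hnonpiv j hj).trans hδ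
  · have : g - g' = ∑ j, q j • z j := by simp [g']
    rw [this]
    exact Submodule.sum_mem _ fun j _ =>
      Submodule.smul_mem _ _ (Submodule.subset_span ⟨hz0 j, hzd j⟩)

end PrimeBound

namespace PrimeBound
open Matrix

/-- The matrix over `R` of the `R`-linear system obtained from a system over `R[X]` by comparing
coefficients, for unknowns of degree at most `E`. -/
def expandMat {R : Type*} [CommRing R] {ι κ : Type} (Q : Matrix ι κ (Polynomial R)) (E L : ℕ) :
    Matrix (ι × Fin L) (κ × Fin (E + 1)) R :=
  fun x y => if (y.2 : ℕ) ≤ x.2 then (Q x.1 y.1).coeff (x.2 - y.2) else 0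

/-- The vector of polynomials of degree at most `E` with given coefficients. -/
noncomputable def liftVec {R : Type*} [CommRing R] {κ : Type} {E : ℕ} (z : κ × Fin (E + 1) → R) :
    κ → Polynomial R :=
  fun j => ∑ l : Fin (E + 1), Polynomial.C (z (j, l)) * Polynomial.X ^ (l : ℕ)

lemma coeff_mulVec_liftVec {R : Type*} [CommRing R] {ι κ : Type} [Fintype κ]
    (Q : Matrix ι κ (Polynomial R)) {E L : ℕ} (z : κ × Fin (E + 1) → R) (i : ι) (l : Fin L) :
    ((Q *ᵥ liftVec z) i).coeff l = (expandMat Q E L *ᵥ z) (i, l) := by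
  simp only [Matrix.mulVec, dotProduct, liftVec, Polynomial.finsetSum_coeff, Finset.mul_sum,
    Fintype.sum_prod_type, expandMat]
  refine Finset.sum_congr rfl fun j _ => Finset.sum_congr rfl fun x _ => ?_
  rw [mul_left_comm, Polynomial.coeff_C_mul, Polynomial.coeff_mul_X_pow']
  split_ifs
  · ring
  · ring

lemma natDegree_liftVec_le {R : Type*} [CommRing R] {κ : Type} {E : ℕ} (z : κ × Fin (E + 1) → R)
    (j : κ) : (liftVec z j).natDegree ≤ E := by
  refine Polynomial.natDegree_sum_le_of_forall_le _ _ fun l _ => ?_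
  exact (Polynomial.natDegree_C_mul_X_pow_le _ _).trans (Nat.lt_succ_iff.mp l.2)

lemma natDegree_mulVec_le {R : Type*} [CommRing R] {ι κ : Type} [Fintype κ]
    (Q : Matrix ι κ (Polynomial R)) {E d : ℕ} (hQ : ∀ i j, (Q i j).natDegree ≤ d)
    (g : κ → Polynomial R) (hg : ∀ j, (g j).natDegree ≤ E) (i : ι) :
    ((Q *ᵥ g) i).natDegree ≤ E + d := by
  refine Polynomial.natDegree_sum_le_of_forall_le _ _ fun j _ => ?_
  exact Polynomial.natDegree_mul_le.trans (by rw [add_comm]; exact add_le_add (hg j) (hQ i j))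

lemma liftVec_coeff {R : Type*} [CommRing R] {κ : Type} {E : ℕ} (g : κ → Polynomial R)
    (hg : ∀ j, (g j).natDegree ≤ E) :
    liftVec (E := E) (fun y => (g y.1).coeff y.2) = g := by
  funext j
  conv_rhs => rw [Polynomial.as_sum_range_C_mul_X_pow' (p := g j) (n := E + 1)
    (Nat.lt_succ_of_le (hg j))]
  simp only [liftVec]
  rw [Fin.sum_univ_eq_sum_range (fun l => Polynomial.C ((g j).coeff l) * Polynomial.X ^ l)]

lemma mulVec_liftVec_eq {R : Type*} [CommRing R] {ι κ : Type} [Fintype κ]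
    (Q : Matrix ι κ (Polynomial R)) {E d : ℕ} (hQ : ∀ i j, (Q i j).natDegree ≤ d)
    (b : ι → Polynomial R) (hb : ∀ i, (b i).natDegree ≤ E + d) (z : κ × Fin (E + 1) → R)
    (hz : expandMat Q E (E + d + 1) *ᵥ z = fun x => (b x.1).coeff x.2) : Q *ᵥ liftVec z = b := by
  funext i
  ext l
  by_cases hl : l < E + d + 1
  · have := coeff_mulVec_liftVec Q z i (⟨l, hl⟩ : Fin (E + d + 1))
    rw [hz] at this
    exact this
  · rw [Polynomial.coeff_eq_zero_of_natDegree_lt, Polynomial.coeff_eq_zero_of_natDegree_lt]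
    · exact (hb i).trans_lt (by omega)
    · exact (natDegree_mulVec_le Q hQ _ (natDegree_liftVec_le z) i).trans_lt (by omega)

/-- Bounded solutions of the coefficient system over `R` assemble to bounded solutions of the
original system over `R[X]`. -/
lemma HasBddSol.of_expand {R : Type*} [CommRing R] {dlR : ℕ → R → Prop}
    {dlS : ℕ → Polynomial R → Prop} (hdlS : IsDegFilt dlS)
    (hCX : ∀ t a i, dlR t a → dlS (t + i) (Polynomial.C a * Polynomial.X ^ i))
    {ι κ : Type} [Fintype κ] (Q : Matrix ι κ (Polynomial R)) {E d β : ℕ}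
    (hQ : ∀ i j, (Q i j).natDegree ≤ d) (b : ι → Polynomial R)
    (hb : ∀ i, (b i).natDegree ≤ E + d) (g : κ → Polynomial R) (hg : ∀ j, (g j).natDegree ≤ E)
    (h : HasBddSol dlR β (expandMat Q E (E + d + 1)) (fun x => (b x.1).coeff x.2)
      (fun y => (g y.1).coeff y.2)) : HasBddSol dlS (β + E) Q b g := by
  have hdeg : ∀ z : κ × Fin (E + 1) → R, (∀ y, dlR β (z y)) → ∀ j, dlS (β + E) (liftVec z j) := by
    intro z hz j
    refine hdlS.sum _ _ fun l _ => ?_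
    exact hdlS.mono (by omega) (hCX _ _ _ (hz (j, l)))
  obtain ⟨g₀, h1, h2, h3⟩ := h
  refine ⟨liftVec g₀, mulVec_liftVec_eq Q hQ b hb g₀ h1, hdeg g₀ h2, ?_⟩
  have key : ∀ v ∈ Submodule.span R
        {z : κ × Fin (E + 1) → R | expandMat Q E (E + d + 1) *ᵥ z = 0 ∧ ∀ j, dlR β (z j)},
      liftVec v ∈ Submodule.span (Polynomial R)
        {z : κ → Polynomial R | Q *ᵥ z = 0 ∧ ∀ j, dlS (β + E) (z j)} := by
    intro v hv
    induction hv using Submodule.span_induction with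
    | mem x hx =>
      refine Submodule.subset_span ⟨mulVec_liftVec_eq Q hQ 0 (by simp) x ?_, hdeg x hx.2⟩
      rw [hx.1]; funext i; simp
    | zero =>
      have h0 : liftVec (0 : κ × Fin (E + 1) → R) = 0 := by funext j; simp [liftVec]
      rw [h0]
      exact Submodule.zero_mem _
    | add x y _ _ hx hy =>
      have := Submodule.add_mem _ hx hy
      convert this using 1
      funext j; simp [liftVec, add_mul, Finset.sum_add_distrib]
    | smul a x _ hx =>
      have := Submodule.smul_mem _ (Polynomial.C a) hx
      convert this using 1
      funext j; simp [liftVec, Finset.mul_sum, mul_assoc]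
  have h4 := key _ h3
  have h5 : liftVec ((fun y : κ × Fin (E + 1) => (g y.1).coeff y.2) - g₀) = g - liftVec g₀ := by
    conv_rhs => rw [← liftVec_coeff g hg]
    funext j
    simp [liftVec, sub_mul, Finset.sum_sub_distrib]
  rwa [h5] at h4

lemma HasBddSol.mono {R : Type*} [CommRing R] {dl : ℕ → R → Prop} (hdl : IsDegFilt dl) {β β' : ℕ}
    (hβ : β ≤ β') {ι κ : Type} [Fintype κ] {Q : Matrix ι κ R} {b : ι → R} {g : κ → R}
    (h : HasBddSol dl β Q b g) : HasBddSol dl β' Q b g := by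
  obtain ⟨g₀, h1, h2, h3⟩ := h
  refine ⟨g₀, h1, fun j => hdl.mono hβ (h2 j), Submodule.span_mono ?_ h3⟩
  rintro z ⟨hz, hz'⟩
  exact ⟨hz, fun j => hdl.mono hβ (hz' j)⟩

/-- If two solutions differ by a combination of bounded homogeneous solutions, boundedness can be
tested on either. -/
lemma HasBddSol.of_sub_mem {R : Type*} [CommRing R] {dl : ℕ → R → Prop} (hdl : IsDegFilt dl)
    {β β' : ℕ} (hβ : β' ≤ β) {ι κ : Type} [Fintype κ] {Q : Matrix ι κ R} {b : ι → R} {g g' : κ → R}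
    (h : HasBddSol dl β Q b g')
    (hs : g - g' ∈ Submodule.span R {z : κ → R | Q *ᵥ z = 0 ∧ ∀ j, dl β' (z j)}) :
    HasBddSol dl β Q b g := by
  obtain ⟨g₀, h1, h2, h3⟩ := h
  refine ⟨g₀, h1, h2, ?_⟩
  have h4 : g - g' ∈ Submodule.span R {z : κ → R | Q *ᵥ z = 0 ∧ ∀ j, dl β (z j)} := by
    refine Submodule.span_mono ?_ hs
    rintro z ⟨hz, hz'⟩
    exact ⟨hz, fun j => hdl.mono hβ (hz' j)⟩
  have := Submodule.add_mem _ h4 h3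
  convert this using 1
  abel

end PrimeBound

/-! ### Hermann's theorem -/

namespace PrimeBound
open Matrix

lemma finSuccEquiv_symm_C_mul_X_pow {F : Type*} [CommRing F] {n : ℕ}
    (a : MvPolynomial (Fin n) F) (i : ℕ) :
    (MvPolynomial.finSuccEquiv F n).symm (Polynomial.C a * Polynomial.X ^ i) =
      MvPolynomial.rename Fin.succ a * MvPolynomial.X 0 ^ i := by
  rw [AlgEquiv.symm_apply_eq, map_mul, map_pow, MvPolynomial.finSuccEquiv_X_zero]
  congr 1
  induction a using MvPolynomial.induction_on with
  | C r => simp [MvPolynomial.finSuccEquiv_apply]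
  | add p q hp hq => rw [map_add, map_add, map_add, hp, hq]
  | mul_X p j hp =>
    rw [map_mul, map_mul, map_mul, hp, MvPolynomial.rename_X, MvPolynomial.finSuccEquiv_X_succ]

/-- The degree bound in Hermann's theorem, with a correction term that makes the induction on the
number of variables go through. The subtraction never truncates: `m * d ≤ (3 * m * d) ^ 2 ^ n`. -/
def hermannBound (n m d : ℕ) : ℕ := (3 * m * d) ^ 2 ^ n - m * d

lemma hermannBound_step {n m d : ℕ} (hm : 1 ≤ m) (hd : 1 ≤ d) :
    hermannBound n (3 * m ^ 2 * d) d + m * d ≤ hermannBound (n + 1) m d := by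
  unfold hermannBound
  have h1 : (3 * (3 * m ^ 2 * d) * d) ^ 2 ^ n = (3 * m * d) ^ 2 ^ (n + 1) := by
    rw [pow_succ 2 n, mul_comm (2 ^ n) 2, pow_mul]
    congr 1
    ring
  rw [h1]
  have h2 : 3 * m ^ 2 * d * d ≤ (3 * m * d) ^ 2 ^ (n + 1) := by
    calc 3 * m ^ 2 * d * d ≤ (3 * m * d) ^ 2 := by nlinarith [sq_nonneg (m * d)]
      _ ≤ _ := by
        apply Nat.pow_le_pow_right (by positivity)
        exact le_self_pow₀ (by norm_num) (by omega)
  have h3 : 2 * (m * d) ≤ 3 * m ^ 2 * d * d := by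
    have : 1 ≤ m * d := Nat.mul_pos hm hd
    nlinarith
  omega

lemma mul_le_hermannBound {n m d : ℕ} (hm : 1 ≤ m) (hd : 1 ≤ d) :
    m * d ≤ hermannBound (n + 1) m d :=
  (Nat.le_add_left _ _).trans (hermannBound_step hm hd)

lemma hermannBound_le {n m d : ℕ} : hermannBound n m d ≤ (3 * m * d) ^ 2 ^ n := Nat.sub_le _ _

/-- **Hermann's theorem**: over an infinite field, the solutions of a polynomial linear system
with entries of degree at most `d` are generated by solutions of bounded degree. In the induction
step a maximal minor is made monic in the first variable; division by it bounds the degree of the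
solutions in that variable by `m * d`, and comparing coefficients leaves a system with at most
`m * (m * d + d + 1) ≤ 3 * m ^ 2 * d` equations in one variable less. -/
theorem hermann {F : Type*} [Field F] [Infinite F] (n : ℕ) :
    ∀ {ι κ : Type} [Fintype ι] [Fintype κ] (m d : ℕ) (_ : 1 ≤ m) (_ : 1 ≤ d)
      (_ : Fintype.card ι ≤ m) (Q : Matrix ι κ (MvPolynomial (Fin n) F))
      (b : ι → MvPolynomial (Fin n) F) (_ : ∀ i j, (Q i j).totalDegree ≤ d)
      (_ : ∀ i, (b i).totalDegree ≤ d) (g : κ → MvPolynomial (Fin n) F) (_ : Q *ᵥ g = b),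
      HasBddSol (fun t p => p.totalDegree ≤ t) (hermannBound n m d) Q b g := by
  induction n with
  | zero =>
    intro ι κ _ _ m d hm hd hι Q b hQ hb g hg
    refine ⟨g, hg, fun j => ?_, by simp⟩
    change (g j).totalDegree ≤ _
    rw [MvPolynomial.eq_C_of_isEmpty (g j), MvPolynomial.totalDegree_C]
    exact Nat.zero_le _
  | succ n ih =>
    intro ι κ _ _ m d hm hd hι Q b hQ hb g hg
    classical
    obtain ⟨N, r, c, hN, hc, hdet, hker⟩ := exists_pivot Q
    obtain ⟨φ, hφ, hφs, hunit⟩ := exists_linear_change _ hdet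
    -- after the change of coordinates, the first variable becomes the polynomial variable
    let e : MvPolynomial (Fin (n + 1)) F ≃+* Polynomial (MvPolynomial (Fin n) F) :=
      (φ.trans (MvPolynomial.finSuccEquiv F n)).toRingEquiv
    let dlS : ℕ → Polynomial (MvPolynomial (Fin n) F) → Prop :=
      fun t q => ((MvPolynomial.finSuccEquiv F n).symm q).totalDegree ≤ t
    have hdlS : IsDegFilt dlS := by
      have h := isDegFilt_totalDegree (Fin (n + 1)) F
      refine ⟨fun h1 h2 => h.mono h1 h2, ?_, ?_, fun h1 h2 => ?_, fun h1 => ?_, fun h1 h2 => ?_⟩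
      · simp [dlS]
      · simp [dlS]
      · simp only [dlS, map_add]; exact h.add h1 h2
      · simp only [dlS, map_neg]; exact h.neg h1
      · simp only [dlS, map_mul]; exact h.mul h1 h2
    have hnat : ∀ t q, dlS t q → q.natDegree ≤ t := by
      intro t q h
      have := MvPolynomial.natDegree_finSuccEquiv ((MvPolynomial.finSuccEquiv F n).symm q)
      rw [AlgEquiv.apply_symm_apply] at this
      rw [this]
      exact (MvPolynomial.degreeOf_le_totalDegree _ _).trans h
    have hcoef : ∀ t q i, dlS t q → (q.coeff i).totalDegree ≤ t := by
      intro t q i h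
      by_cases h0 : q.coeff i = 0
      · simp [h0]
      have := MvPolynomial.totalDegree_coeff_finSuccEquiv_add_le
        ((MvPolynomial.finSuccEquiv F n).symm q) i (by rwa [AlgEquiv.apply_symm_apply])
      rw [AlgEquiv.apply_symm_apply] at this
      have h' : ((MvPolynomial.finSuccEquiv F n).symm q).totalDegree ≤ t := h
      omega
    have hCX : ∀ t (a : MvPolynomial (Fin n) F) i, a.totalDegree ≤ t →
        dlS (t + i) (Polynomial.C a * Polynomial.X ^ i) := by
      intro t a i h
      simp only [dlS, finSuccEquiv_symm_C_mul_X_pow]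
      refine (MvPolynomial.totalDegree_mul _ _).trans (add_le_add ?_ ?_)
      · exact (MvPolynomial.totalDegree_rename_le _ _).trans h
      · exact (MvPolynomial.totalDegree_X_pow _ _).le
    have he : ∀ p, dlS p.totalDegree (e p) := by
      intro p
      change ((MvPolynomial.finSuccEquiv F n).symm (MvPolynomial.finSuccEquiv F n (φ p))).totalDegree
        ≤ _
      rw [AlgEquiv.symm_apply_apply]
      exact hφ p
    have hes : ∀ x, dlS (hermannBound (n + 1) m d) x →
        (e.symm x).totalDegree ≤ hermannBound (n + 1) m d := fun x hx => (hφs _).trans hx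
    apply HasBddSol.transport e (dl' := dlS) hes
    have hmv : ∀ z : κ → MvPolynomial (Fin (n + 1)) F,
        Q.map e *ᵥ (fun j => e (z j)) = fun i => e ((Q *ᵥ z) i) := by
      intro z
      funext i
      simp [Matrix.mulVec, dotProduct]
    have hQ' : ∀ i j, dlS d ((Q.map e) i j) := fun i j => hdlS.mono (hQ i j) (he _)
    have hb' : ∀ i, dlS d (e (b i)) := fun i => hdlS.mono (hb i) (he _)
    obtain ⟨g', hg', hgd, hgs⟩ := exists_reduced hdlS hnat (Q.map e) (fun i => e (b i))
      (fun j => e (g j)) (m := m) hQ' hb' (by rw [hmv, hg]) r c (hN.trans hι) hc (by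
        have : ((Q.map e).submatrix r c).det = e (Q.submatrix r c).det := by
          rw [RingEquiv.map_det]; rfl
        rw [this]
        exact hunit) (by
        intro z hz
        have h1 : z = fun j => e (e.symm (z j)) := by funext j; simp
        rw [h1, hmv] at hz ⊢
        have h2 := hker (fun j => e.symm (z j)) (fun a => by
          have := hz a
          exact (map_eq_zero_iff e e.injective).mp this)
        rw [h2]; funext i; simp)
    -- the reduced solution has degree at most `m * d` in the first variable, so its coefficients
    -- solve the expanded system
    refine HasBddSol.of_sub_mem hdlS (mul_le_hermannBound hm hd) ?_ hgs
    refine HasBddSol.mono hdlS (hermannBound_step hm hd) ?_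
    refine HasBddSol.of_expand hdlS hCX (d := d) (Q.map e) (fun i j => hnat _ _ (hQ' i j)) _
      (fun i => (hnat _ _ (hb' i)).trans (Nat.le_add_left _ _)) g' hgd ?_
    refine ih (3 * m ^ 2 * d) d ?_ hd ?_ _ _ ?_ ?_ _ ?_
    · exact Nat.mul_pos (by positivity) hd
    · rw [Fintype.card_prod, Fintype.card_fin]
      calc _ ≤ m * (m * d + d + 1) := Nat.mul_le_mul_right _ hι
        _ ≤ m * (m * d + m * d + m * d) := by
          apply Nat.mul_le_mul_left
          have : 1 ≤ m * d := Nat.mul_pos hm hd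
          nlinarith
        _ = _ := by ring
    · intro x y
      unfold expandMat
      split_ifs
      · exact hcoef _ _ _ (hQ' _ _)
      · simp
    · intro x
      exact hcoef _ _ _ (hb' _)
    · funext x
      have h1 := coeff_mulVec_liftVec (Q.map e) (fun y : κ × Fin (m * d + 1) => (g' y.1).coeff y.2)
        x.1 x.2
      rw [liftVec_coeff g' hgd, hg'] at h1
      exact h1.symm

/-- Hermann's bound for ideal membership. -/
lemma hermann_ideal {F : Type*} [Field F] [Infinite F] {n d p : ℕ} (hd : 1 ≤ d)
    (f : Fin p → MvPolynomial (Fin n) F) (hf : ∀ i, (f i).totalDegree ≤ d)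
    (b : MvPolynomial (Fin n) F) (hb : b.totalDegree ≤ d) (hmem : b ∈ Ideal.span (Set.range f)) :
    ∃ g : Fin p → MvPolynomial (Fin n) F, (∀ i, (g i).totalDegree ≤ (3 * d) ^ 2 ^ n) ∧
      ∑ i, g i * f i = b := by
  obtain ⟨g, hg⟩ := (Ideal.mem_span_range_iff_exists_fun).mp hmem
  obtain ⟨g₀, h1, h2, -⟩ := hermann n 1 d le_rfl hd (by simp)
    (Matrix.of fun (_ : Unit) i => f i) (fun _ => b) (fun _ i => hf i) (fun _ => hb) g (by
      funext i
      simp only [Matrix.mulVec, dotProduct, Matrix.of_apply, ← hg]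
      exact Finset.sum_congr rfl fun _ _ => mul_comm _ _)
  refine ⟨g₀, fun i => (h2 i).trans (by simpa using hermannBound_le (n := n) (m := 1) (d := d)), ?_⟩
  have := congrFun h1 ()
  simp only [Matrix.mulVec, dotProduct, Matrix.of_apply] at this
  rw [← this]
  exact Finset.sum_congr rfl fun _ _ => mul_comm _ _

/-- An ideal that is prime up to a large bound has no zero divisors of small degree modulo it,
whatever the degree of the other factor. -/
lemma nzd_of_prime_up_to {F : Type*} [Field F] [Infinite F] {n d p B B' : ℕ} (hd : 1 ≤ d)
    (f : Fin p → MvPolynomial (Fin n) F) (hf : ∀ i, (f i).totalDegree ≤ d) (hdB : d ≤ B')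
    (hB : (3 * B') ^ 2 ^ n ≤ B)
    (hprime : ∀ u v : MvPolynomial (Fin n) F, u.totalDegree ≤ B → v.totalDegree ≤ B →
      u * v ∈ Ideal.span (Set.range f) →
        u ∈ Ideal.span (Set.range f) ∨ v ∈ Ideal.span (Set.range f))
    (u : MvPolynomial (Fin n) F) (hu : u.totalDegree ≤ B') (huI : u ∉ Ideal.span (Set.range f))
    (v : MvPolynomial (Fin n) F) (huv : u * v ∈ Ideal.span (Set.range f)) :
    v ∈ Ideal.span (Set.range f) := by
  set I := Ideal.span (Set.range f) with hI
  have hB'B : B' ≤ B := by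
    refine le_trans ?_ hB
    calc B' ≤ 3 * B' := by omega
      _ ≤ _ := le_self_pow₀ (by omega) (by positivity)
  obtain ⟨g, hg⟩ := (Ideal.mem_span_range_iff_exists_fun).mp huv
  let Q : Matrix Unit (Option (Fin p)) (MvPolynomial (Fin n) F) :=
    Matrix.of fun _ j => j.elim u f
  have hQ : ∀ z : Option (Fin p) → MvPolynomial (Fin n) F, ∀ i,
      (Q *ᵥ z) i = u * z none + ∑ i, f i * z (some i) := by
    intro z i
    simp [Q, Matrix.mulVec, dotProduct, Fintype.sum_option]
  obtain ⟨g₀, h1, h2, h3⟩ := hermann n 1 B' le_rfl (hd.trans hdB) (by simp) Q 0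
    (fun _ j => by
      cases j with
      | none => exact hu
      | some j => exact (hf j).trans hdB) (fun _ => by simp)
    (fun j => j.elim v (fun i => - g i)) (by
      funext i
      rw [hQ]
      simp only [Option.elim, Pi.zero_apply, ← hg, ← Finset.sum_add_distrib]
      exact Finset.sum_eq_zero fun _ _ => by ring)
  have hle : hermannBound n 1 B' ≤ B :=
    (hermannBound_le.trans (by simp)).trans hB
  have key : ∀ z : Option (Fin p) → MvPolynomial (Fin n) F, Q *ᵥ z = 0 →
      (∀ j, (z j).totalDegree ≤ hermannBound n 1 B') → z none ∈ I := by
    intro z hz hzd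
    have h0 := congrFun hz ()
    rw [hQ] at h0
    have : u * z none ∈ I := by
      have h4 : u * z none = ∑ i, (- z (some i)) * f i := by
        rw [eq_neg_of_add_eq_zero_left h0, ← Finset.sum_neg_distrib]
        exact Finset.sum_congr rfl fun _ _ => by ring
      rw [h4]
      exact Ideal.sum_mem _ fun i _ => Ideal.mul_mem_left _ _ (Ideal.subset_span ⟨i, rfl⟩)
    exact (hprime _ _ (hu.trans hB'B) ((hzd none).trans hle) this).resolve_left huI
  have hspan : ∀ w ∈ Submodule.span (MvPolynomial (Fin n) F)
      {z : Option (Fin p) → MvPolynomial (Fin n) F | Q *ᵥ z = 0 ∧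
        ∀ j, (z j).totalDegree ≤ hermannBound n 1 B'}, w none ∈ I := by
    intro w hw
    induction hw using Submodule.span_induction with
    | mem x hx => exact key x hx.1 hx.2
    | zero => exact I.zero_mem
    | add x y _ _ hx hy => exact I.add_mem hx hy
    | smul a x _ hx => exact I.mul_mem_left a hx
  have h5 := I.add_mem (hspan _ h3) (key _ h1 h2)
  simpa using h5

end PrimeBound

/-! ### Bounded relations over the coefficient ring -/

namespace PrimeBound
open Matrix

/-- The exponent vector attached to a point of the box `{0, …, N}^m`. -/
noncomputable def boxExp {m N : ℕ} (x : Fin m → Fin (N + 1)) : Fin m →₀ ℕ :=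
  Finsupp.equivFunOnFinite.symm fun i => (x i : ℕ)

lemma exists_boxExp {m N : ℕ} (γ : Fin m →₀ ℕ) (h : ∀ i, γ i ≤ N) :
    ∃ x : Fin m → Fin (N + 1), boxExp x = γ := by
  refine ⟨fun i => ⟨γ i, Nat.lt_succ_of_le (h i)⟩, ?_⟩
  ext i
  simp [boxExp]

lemma ext_of_box {A : Type*} [CommRing A] {m N : ℕ} {p q : MvPolynomial (Fin m) A}
    (hp : p.totalDegree ≤ N) (hq : q.totalDegree ≤ N)
    (h : ∀ x : Fin m → Fin (N + 1), p.coeff (boxExp x) = q.coeff (boxExp x)) : p = q := by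
  ext γ
  by_cases hγ : ∀ i, γ i ≤ N
  · obtain ⟨x, rfl⟩ := exists_boxExp γ hγ
    exact h x
  · push Not at hγ
    obtain ⟨i, hi⟩ := hγ
    have hlt : N < γ.degree := lt_of_lt_of_le hi (Finsupp.le_degree i γ)
    rw [MvPolynomial.coeff_eq_zero_of_totalDegree_lt, MvPolynomial.coeff_eq_zero_of_totalDegree_lt]
    · exact lt_of_le_of_lt hq hlt
    · exact lt_of_le_of_lt hp hlt

/-- A relation modulo an ideal of `A[y₁, …, y_m]` with coefficients in `A` can be replaced by one
whose coefficients have bounded degree. -/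
lemma exists_bounded_relation {A : Type*} [CommRing A] [IsDomain A] [Infinite A]
    {dl : ℕ → A → Prop} (h : IsDegFilt dl) {m d e p q : ℕ} (he : 1 ≤ e)
    (F : Fin p → MvPolynomial (Fin m) A) (hF : ∀ i, (F i).totalDegree ≤ e)
    (hFc : ∀ i γ, dl d ((F i).coeff γ))
    (w : MvPolynomial (Fin m) A) (hw : w.totalDegree ≤ e) (hwc : ∀ γ, dl d (w.coeff γ))
    (v : Fin q → MvPolynomial (Fin m) A) (hv : ∀ i, (v i).totalDegree ≤ e)
    (hvc : ∀ i γ, dl d ((v i).coeff γ)) (c : A) (hc : c ≠ 0) (b : Fin q → A)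
    (hrel : MvPolynomial.C c * w - ∑ k, MvPolynomial.C (b k) * v k ∈ Ideal.span (Set.range F)) :
    ∃ (c' : A) (b' : Fin q → A), c' ≠ 0 ∧ dl (((3 * e) ^ 2 ^ m + e + 1) ^ m * d) c' ∧
      (∀ k, dl (((3 * e) ^ 2 ^ m + e + 1) ^ m * d) (b' k)) ∧
      MvPolynomial.C c' * w - ∑ k, MvPolynomial.C (b' k) * v k ∈ Ideal.span (Set.range F) := by
  classical
  set K := FractionRing A
  have hinj : Function.Injective (algebraMap A K) := IsFractionRing.injective A K
  have : Infinite K := Infinite.of_injective _ hinj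
  set β := (3 * e) ^ 2 ^ m with hβ
  let φ : MvPolynomial (Fin m) A →+* MvPolynomial (Fin m) K := MvPolynomial.map (algebraMap A K)
  have hφ : Function.Injective φ := MvPolynomial.map_injective _ hinj
  have hφd : ∀ x, (φ x).totalDegree ≤ x.totalDegree := fun x =>
    Finset.sup_mono (MvPolynomial.support_map_subset _ _)
  set u := MvPolynomial.C c * w - ∑ k, MvPolynomial.C (b k) * v k with hu
  have hCmul : ∀ (a : A) (x : MvPolynomial (Fin m) A), x.totalDegree ≤ e →
      (MvPolynomial.C a * x).totalDegree ≤ e := by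
    intro a x hx
    refine (MvPolynomial.totalDegree_mul _ _).trans ?_
    simpa using hx
  have hud : u.totalDegree ≤ e := by
    refine (MvPolynomial.totalDegree_sub _ _).trans (max_le (hCmul _ _ hw) ?_)
    exact MvPolynomial.totalDegree_finsetSum_le fun k _ => hCmul _ _ (hv k)
  have hmem : φ u ∈ Ideal.span (Set.range fun i => φ (F i)) := by
    have h1 := Ideal.mem_map_of_mem φ hrel
    rw [Ideal.map_span, ← Set.range_comp] at h1
    exact h1
  obtain ⟨G, hG, hGu⟩ := hermann_ideal he (fun i => φ (F i)) (fun i => (hφd _).trans (hF i)) (φ u)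
    ((hφd _).trans hud) hmem
  let S : Finset (Fin m →₀ ℕ) := Finset.univ.biUnion fun i => (G i).support
  obtain ⟨s, hs⟩ := IsLocalization.exist_integer_multiples_of_finite (nonZeroDivisors A)
    (fun x : Fin p × S => (G x.1).coeff x.2)
  choose z hz using hs
  have hs0 : (s : A) ≠ 0 := nonZeroDivisors.ne_zero s.2
  have hSdeg : ∀ μ ∈ S, μ.degree ≤ β := by
    intro μ hμ
    obtain ⟨i, -, hi⟩ := Finset.mem_biUnion.mp hμ
    exact (MvPolynomial.le_totalDegree hi).trans (hG i)
  have hGsum : ∀ i, G i = ∑ μ : S, MvPolynomial.monomial (μ : Fin m →₀ ℕ) ((G i).coeff μ) := by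
    intro i
    rw [Finset.sum_coe_sort S (fun μ => MvPolynomial.monomial μ ((G i).coeff μ))]
    conv_lhs => rw [MvPolynomial.as_sum (G i)]
    refine Finset.sum_subset (fun μ hμ => Finset.mem_biUnion.mpr ⟨i, Finset.mem_univ _, hμ⟩) ?_
    intro μ _ hμ
    rw [MvPolynomial.notMem_support_iff.mp hμ, MvPolynomial.monomial_zero]
  -- the combination of the generators attached to a vector of coefficients
  let comb : (Fin p × S → A) → MvPolynomial (Fin m) A := fun y =>
    ∑ x : Fin p × S, MvPolynomial.monomial (x.2 : Fin m →₀ ℕ) (y x) * F x.1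
  have hsu : MvPolynomial.C (s : A) * u = comb z := by
    apply hφ
    rw [map_mul, ← hGu, Finset.mul_sum]
    simp only [comb, map_sum, Fintype.sum_prod_type, map_mul]
    refine Finset.sum_congr rfl fun i _ => ?_
    rw [hGsum i, Finset.sum_mul, Finset.mul_sum]
    refine Finset.sum_congr rfl fun μ _ => ?_
    have := hz (i, μ)
    simp only [φ, MvPolynomial.map_monomial, MvPolynomial.map_C, this, Algebra.smul_def]
    rw [← mul_assoc, MvPolynomial.C_mul_monomial]
  set N := β + e with hN
  let Q : Matrix (Fin m → Fin (N + 1)) (Fin q ⊕ (Fin p × S)) A := Matrix.of fun γ j =>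
    j.elim (fun k => (v k).coeff (boxExp γ))
      (fun x => (MvPolynomial.monomial (x.2 : Fin m →₀ ℕ) 1 * F x.1).coeff (boxExp γ))
  have hQmul : ∀ (y : Fin q ⊕ (Fin p × S) → A) γ, (Q *ᵥ y) γ =
      (∑ k, MvPolynomial.C (y (Sum.inl k)) * v k + comb (fun x => y (Sum.inr x))).coeff
        (boxExp γ) := by
    intro y γ
    simp only [Q, Matrix.mulVec, dotProduct, Matrix.of_apply, Fintype.sum_sum_type, Sum.elim_inl,
      Sum.elim_inr, MvPolynomial.coeff_add, MvPolynomial.coeff_sum, MvPolynomial.coeff_C_mul, comb]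
    congr 1
    · exact Finset.sum_congr rfl fun _ _ => mul_comm _ _
    · refine Finset.sum_congr rfl fun x _ => ?_
      rw [mul_comm, ← MvPolynomial.coeff_C_mul, ← mul_assoc, MvPolynomial.C_mul_monomial, mul_one]
  obtain ⟨c', x, hc', hcd, hxd, hx⟩ := exists_cramer h Q (fun γ => w.coeff (boxExp γ)) (d := d)
    (by
      intro γ j
      cases j with
      | inl k => exact hvc k _
      | inr y =>
        simp only [Q, Matrix.of_apply, Sum.elim_inr, MvPolynomial.coeff_monomial_mul']
        split_ifs
        · rw [one_mul]; exact hFc _ _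
        · exact h.zero' _) (fun γ => hwc _)
    (Sum.elim (fun k => s * b k) z) (s * c) (mul_ne_zero hs0 hc) (by
      funext γ
      rw [hQmul]
      simp only [Sum.elim_inl, Sum.elim_inr, Pi.smul_apply, smul_eq_mul, ← hsu]
      rw [← MvPolynomial.coeff_C_mul]
      congr 1
      simp only [hu, MvPolynomial.C_mul, mul_sub, Finset.mul_sum, mul_assoc]
      ring)
  have hcard : Fintype.card (Fin m → Fin (N + 1)) * d = (β + e + 1) ^ m * d := by
    simp [hN]
  rw [hcard] at hcd hxd
  refine ⟨c', fun k => x (Sum.inl k), hc', hcd, fun k => hxd _, ?_⟩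
  have hcomb : MvPolynomial.C c' * w =
      ∑ k, MvPolynomial.C (x (Sum.inl k)) * v k + comb (fun y => x (Sum.inr y)) := by
    refine ext_of_box (N := N) ((hCmul _ _ hw).trans (Nat.le_add_left _ _)) ?_ fun γ => ?_
    · refine (MvPolynomial.totalDegree_add _ _).trans (max_le ?_ ?_)
      · exact MvPolynomial.totalDegree_finsetSum_le fun k _ =>
          (hCmul _ _ (hv k)).trans (Nat.le_add_left _ _)
      · refine MvPolynomial.totalDegree_finsetSum_le fun y _ => ?_
        refine (MvPolynomial.totalDegree_mul _ _).trans (add_le_add ?_ (hF _))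
        exact (MvPolynomial.totalDegree_monomial_le _ _).trans (hSdeg _ y.2.2)
    · rw [← hQmul, hx, MvPolynomial.coeff_C_mul]
      rfl
  rw [hcomb, add_sub_cancel_left]
  exact Ideal.sum_mem _ fun y _ => Ideal.mul_mem_left _ _ (Ideal.subset_span ⟨_, rfl⟩)

end PrimeBound

/-! ### Counting monomials and a Siegel-type lemma -/

namespace PrimeBound
open Matrix

/-- The exponent vectors of degree at most `t`. -/
noncomputable def expLE (σ : Type) [Fintype σ] [DecidableEq σ] (t : ℕ) : Finset (σ →₀ ℕ) :=
  (Finset.range (t + 1)).biUnion fun j => Finset.finsuppAntidiag Finset.univ j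

lemma mem_expLE {σ : Type} [Fintype σ] [DecidableEq σ] {t : ℕ} {γ : σ →₀ ℕ} :
    γ ∈ expLE σ t ↔ γ.degree ≤ t := by
  simp [expLE, Finset.mem_finsuppAntidiag, Finsupp.degree_eq_sum]

lemma card_expLE (σ : Type) [Fintype σ] [DecidableEq σ] (t : ℕ) :
    (expLE σ t).card = (Fintype.card σ + t).choose t := by
  rw [expLE, Finset.card_biUnion]
  · simp only [Finset.card_finsuppAntidiag_nat_eq_multichoose, Finset.card_univ]
    rw [Nat.sum_range_multichoose, add_comm, Nat.choose_symm_add]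
  · intro i _ j _ hij
    rw [Function.onFun, Finset.disjoint_left]
    intro γ h1 h2
    rw [Finset.mem_finsuppAntidiag] at h1 h2
    exact hij (h1.1.symm.trans h2.1)

/-- Adding `j ≤ δ` steps of the Pascal recursion bounds the growth of the number
`(r + t).choose t` of monomials of degree at most `t` in `r` variables. -/
lemma choose_growth (r t δ j : ℕ) (hj : j ≤ δ) :
    (t + 1 + r) * (r + (t + j)).choose (t + j) ≤
      (t + 1 + r) * (r + t).choose t + j * r * (r + (t + δ)).choose (t + δ) := by
  induction j with
  | zero => simp
  | succ j ih =>
    have ih := ih (by omega)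
    set u := t + j with hu
    have h1 : (r + (u + 1)).choose (u + 1) * (u + 1) = (r + u).choose u * (r + u + 1) := by
      have := Nat.add_one_mul_choose_eq (r + u) u
      rw [show r + (u + 1) = r + u + 1 by ring]
      linarith
    have h2 : (r + (u + 1)).choose (u + 1) ≤ (r + (t + δ)).choose (t + δ) := by
      rw [← Nat.choose_symm_add, ← Nat.choose_symm_add]
      exact Nat.choose_le_choose _ (by omega)
    have h3 : (r + u).choose u ≤ (r + (u + 1)).choose (u + 1) := by
      rw [← Nat.choose_symm_add, ← Nat.choose_symm_add]
      exact Nat.choose_le_choose _ (by omega)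
    rw [show t + (j + 1) = u + 1 by omega]
    obtain ⟨x, hx⟩ := Nat.exists_eq_add_of_le h3
    have h4 : (u + 1 + r) * x = r * (r + (u + 1)).choose (u + 1) := by
      rw [hx] at h1 ⊢
      nlinarith
    have h5 : (t + 1 + r) * x ≤ (u + 1 + r) * x := Nat.mul_le_mul_right _ (by omega)
    have h6 : r * (r + (u + 1)).choose (u + 1) ≤ r * (r + (t + δ)).choose (t + δ) :=
      Nat.mul_le_mul_left _ h2
    calc (t + 1 + r) * (r + (u + 1)).choose (u + 1)
        = (t + 1 + r) * (r + u).choose u + (t + 1 + r) * x := by rw [hx]; ring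
      _ ≤ _ := by nlinarith

/-- Polynomials of degree at most `t + δ` are only slightly more numerous than those of degree at
most `t` when `t` is large compared to `δ`. -/
lemma card_expLE_lt (σ : Type) [Fintype σ] [DecidableEq σ] {t δ D D' : ℕ} (hD : D' < D)
    (ht : D * δ * Fintype.card σ < t + 1 + Fintype.card σ) :
    D' * (expLE σ (t + δ)).card < D * (expLE σ t).card := by
  rw [card_expLE, card_expLE]
  set r := Fintype.card σ
  have h := choose_growth r t δ δ le_rfl
  have hpos : 0 < (r + (t + δ)).choose (t + δ) := Nat.choose_pos (by omega)
  set P := (r + (t + δ)).choose (t + δ)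
  set q := (r + t).choose t
  have h1 : D * ((t + 1 + r) * P) ≤ D * ((t + 1 + r) * q + δ * r * P) := Nat.mul_le_mul_left _ h
  have h2 : D * δ * r * P < (t + 1 + r) * P := Nat.mul_lt_mul_of_pos_right ht hpos
  have h3 : (D' + 1) * ((t + 1 + r) * P) ≤ D * ((t + 1 + r) * P) := Nat.mul_le_mul_right _ hD
  have h4 : (t + 1 + r) * (D' * P) < (t + 1 + r) * (D * q) := by nlinarith
  exact Nat.lt_of_mul_lt_mul_left h4

/-- Siegel-type lemma: fewer than `D` linear forms with polynomial coefficients can be made to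
vanish to high order by polynomials of small degree, not all zero. The order is taken at the origin
after the substitution `θ`; it exceeds the degree bound `t` on the `α i` by `δ + 1`. -/
lemma exists_high_order {k : Type*} [Field k] {σ : Type} [Fintype σ] {D D' t δ : ℕ} (hD : D' < D)
    (ht : D * δ * Fintype.card σ < t + 1 + Fintype.card σ)
    (θ : MvPolynomial σ k →ₐ[k] MvPolynomial σ k) (q : Fin D → Fin D' → MvPolynomial σ k) :
    ∃ α : Fin D → MvPolynomial σ k, α ≠ 0 ∧ (∀ i, (α i).totalDegree ≤ t) ∧
      ∀ l, θ (∑ i, α i * q i l) ∈ MvPolynomial.idealOfVars σ k ^ (t + δ + 1) := by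
  classical
  let lift : (Fin D × expLE σ t → k) →ₗ[k] (Fin D → MvPolynomial σ k) :=
    LinearMap.pi fun i => ∑ γ : expLE σ t,
      (MvPolynomial.monomial (γ : σ →₀ ℕ)).comp (LinearMap.proj (i, γ))
  have hlift : ∀ z i, lift z i = ∑ γ : expLE σ t, MvPolynomial.monomial (γ : σ →₀ ℕ) (z (i, γ)) := by
    intro z i
    simp [lift, LinearMap.sum_apply]
  have hcoef : ∀ z i (γ : expLE σ t), (lift z i).coeff γ = z (i, γ) := by
    intro z i γ
    rw [hlift, MvPolynomial.coeff_sum, Finset.sum_eq_single γ]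
    · simp
    · intro γ' _ hne
      rw [MvPolynomial.coeff_monomial, if_neg]
      exact fun h => hne (Subtype.ext h)
    · simp
  let cond : (Fin D × expLE σ t → k) →ₗ[k] (Fin D' × expLE σ (t + δ) → k) :=
    LinearMap.pi fun x => (MvPolynomial.lcoeff k (x.2 : σ →₀ ℕ)).comp
      (θ.toLinearMap.comp (∑ i, (LinearMap.mulRight k (q i x.1)).comp
        ((LinearMap.proj i).comp lift)))
  have hcond : ∀ z l (γ : expLE σ (t + δ)), cond z (l, γ) =
      (θ (∑ i, lift z i * q i l)).coeff γ := by
    intro z l γ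
    simp [cond, MvPolynomial.coeff_sum]
  have hker : LinearMap.ker cond ≠ ⊥ := by
    apply LinearMap.ker_ne_bot_of_finrank_lt
    simpa using card_expLE_lt σ hD ht
  obtain ⟨z, hz, hz0⟩ := Submodule.exists_mem_ne_zero_of_ne_bot hker
  refine ⟨lift z, ?_, fun i => ?_, fun l => ?_⟩
  · intro h0
    apply hz0
    funext x
    obtain ⟨i, γ⟩ := x
    rw [← hcoef z i γ, h0]
    simp
  · rw [hlift]
    refine MvPolynomial.totalDegree_finsetSum_le fun γ _ => ?_
    exact (MvPolynomial.totalDegree_monomial_le _ _).trans (mem_expLE.mp γ.2)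
  · rw [MvPolynomial.mem_pow_idealOfVars_iff']
    intro γ hγ
    have h1 := hcond z l ⟨γ, mem_expLE.mpr (Nat.lt_succ_iff.mp hγ)⟩
    rw [LinearMap.mem_ker.mp hz] at h1
    exact h1.symm

end PrimeBound

/-! ### Gauss's lemma and orders of vanishing -/

namespace PrimeBound
open Matrix

lemma coeff_coeff_commAlgEquiv {k σ τ : Type*} [CommRing k]
    (p : MvPolynomial τ (MvPolynomial σ k)) (μ : τ →₀ ℕ) (γ : σ →₀ ℕ) :
    ((MvPolynomial.commAlgEquiv k τ σ p).coeff γ).coeff μ = (p.coeff μ).coeff γ := by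
  classical
  have hmon : ∀ u v (a : k), MvPolynomial.commAlgEquiv k τ σ
      (MvPolynomial.monomial u (MvPolynomial.monomial v a)) =
        MvPolynomial.monomial v (MvPolynomial.monomial u a) := by
    intro u v a
    exact AddMonoidAlgebra.commAlgEquiv_single_single ..
  induction p using MvPolynomial.induction_on' with
  | monomial u a =>
    induction a using MvPolynomial.induction_on' with
    | monomial v a =>
      rw [hmon]
      simp only [MvPolynomial.coeff_monomial]
      split_ifs <;> simp [MvPolynomial.coeff_monomial, *]
    | add p q hp hq =>
      rw [map_add, map_add, MvPolynomial.coeff_add, MvPolynomial.coeff_add, hp, hq,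
        MvPolynomial.coeff_add, MvPolynomial.coeff_add]
  | add p q hp hq =>
    rw [map_add, MvPolynomial.coeff_add, MvPolynomial.coeff_add, hp, hq,
        MvPolynomial.coeff_add, MvPolynomial.coeff_add]

lemma totalDegree_le_iff_coeff {υ R : Type*} [CommRing R] (q : MvPolynomial υ R) (δ : ℕ) :
    q.totalDegree ≤ δ ↔ ∀ γ : υ →₀ ℕ, δ < γ.degree → q.coeff γ = 0 := by
  constructor
  · intro h γ hγ
    exact MvPolynomial.coeff_eq_zero_of_totalDegree_lt (lt_of_le_of_lt h hγ)
  · intro h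
    refine Finset.sup_le fun γ hγ => ?_
    by_contra hlt
    exact MvPolynomial.mem_support_iff.mp hγ (h γ (not_le.mp hlt))

lemma coeff_totalDegree_le_iff {k σ τ : Type*} [CommRing k]
    (p : MvPolynomial τ (MvPolynomial σ k)) (δ : ℕ) :
    (∀ μ, (p.coeff μ).totalDegree ≤ δ) ↔
      (MvPolynomial.commAlgEquiv k τ σ p).totalDegree ≤ δ := by
  rw [totalDegree_le_iff_coeff]
  simp only [totalDegree_le_iff_coeff]
  constructor
  · intro h γ hγ
    ext μ
    rw [coeff_coeff_commAlgEquiv, h μ γ hγ]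
    simp
  · intro h μ γ hγ
    rw [← coeff_coeff_commAlgEquiv, h γ hγ]
    simp

/-- Gauss's lemma: a factorization up to a nonzero constant of a polynomial over a unique
factorization domain can be made exact by rescaling the factors. -/
lemma gauss_factor {A τ : Type*} [CommRing A] [IsDomain A] [UniqueFactorizationMonoid A] (c : A) :
    c ≠ 0 → ∀ Φ φ₁ φ₂ : MvPolynomial τ A, MvPolynomial.C c * Φ = φ₁ * φ₂ →
      ∃ (c₁ : A) (ψ₁ ψ₂ : MvPolynomial τ A), c₁ ≠ 0 ∧ MvPolynomial.C c₁ * ψ₁ = φ₁ ∧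
        Φ = ψ₁ * ψ₂ := by
  induction c using UniqueFactorizationMonoid.induction_on_prime with
  | h₁ => intro h; exact absurd rfl h
  | h₂ u hu =>
    intro _ Φ φ₁ φ₂ h
    obtain ⟨u, rfl⟩ := hu
    refine ⟨1, φ₁, MvPolynomial.C (↑u⁻¹ : A) * φ₂, one_ne_zero, by simp, ?_⟩
    rw [mul_left_comm, ← h, ← mul_assoc, ← MvPolynomial.C_mul]
    simp
  | h₃ a p ha hp ih =>
    intro hne Φ φ₁ φ₂ h
    have hp' : Prime (MvPolynomial.C p : MvPolynomial τ A) := (MvPolynomial.prime_C_iff τ).mpr hp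
    rw [MvPolynomial.C_mul, mul_assoc] at h
    rcases hp'.dvd_or_dvd (Dvd.intro _ h) with ⟨x, rfl⟩ | ⟨x, rfl⟩
    · obtain ⟨c₁, ψ₁, ψ₂, h1, h2, h3⟩ := ih ha Φ x φ₂
        (mul_left_cancel₀ hp'.ne_zero (by rw [h, mul_assoc]))
      exact ⟨p * c₁, ψ₁, ψ₂, mul_ne_zero hp.ne_zero h1,
        by rw [MvPolynomial.C_mul, mul_assoc, h2], h3⟩
    · exact ih ha Φ φ₁ x (mul_left_cancel₀ hp'.ne_zero (by rw [h]; ring))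

/-- A factor of `Φ` has coefficients of no larger degree than those of `Φ`: exchanging the two sets
of variables, the maximal degree of the coefficients becomes a total degree, which is additive over
a domain. -/
lemma coeff_totalDegree_factor_le {k σ τ : Type*} [Field k]
    {Φ ψ₁ ψ₂ : MvPolynomial τ (MvPolynomial σ k)} (hΦ : Φ ≠ 0) (h : Φ = ψ₁ * ψ₂) {δ : ℕ}
    (hδ : ∀ μ, (Φ.coeff μ).totalDegree ≤ δ) (μ : τ →₀ ℕ) : (ψ₁.coeff μ).totalDegree ≤ δ := by
  revert μ
  rw [coeff_totalDegree_le_iff] at hδ ⊢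
  have h1 : ψ₁ ≠ 0 := by rintro rfl; simp [h] at hΦ
  have h2 : ψ₂ ≠ 0 := by rintro rfl; simp [h] at hΦ
  rw [h, map_mul, MvPolynomial.totalDegree_mul_of_isDomain (by simpa using h1) (by simpa using h2)]
    at hδ
  omega

lemma totalDegree_eval_le {k σ τ : Type*} [CommRing k] (Ψ : MvPolynomial τ (MvPolynomial σ k))
    {δ D t : ℕ} (hδ : ∀ μ, (Ψ.coeff μ).totalDegree ≤ δ) (hD : Ψ.totalDegree ≤ D)
    (α : τ → MvPolynomial σ k) (hα : ∀ i, (α i).totalDegree ≤ t) :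
    (MvPolynomial.eval α Ψ).totalDegree ≤ δ + D * t := by
  rw [MvPolynomial.eval_eq]
  refine MvPolynomial.totalDegree_finsetSum_le fun μ hμ => ?_
  refine (MvPolynomial.totalDegree_mul _ _).trans (add_le_add (hδ μ) ?_)
  refine (MvPolynomial.totalDegree_finsetProd _ _).trans ?_
  calc ∑ i ∈ μ.support, (α i ^ μ i).totalDegree ≤ ∑ i ∈ μ.support, μ i * t :=
        Finset.sum_le_sum fun i _ => (MvPolynomial.totalDegree_pow _ _).trans
          (Nat.mul_le_mul_left _ (hα i))
    _ = μ.degree * t := by rw [← Finset.sum_mul]; rfl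
    _ ≤ D * t := Nat.mul_le_mul_right _ ((MvPolynomial.le_totalDegree hμ).trans hD)

/-- A polynomial not vanishing at the origin does not contribute to the order of vanishing. -/
lemma mem_pow_of_mul_mem {k σ : Type*} [Field k] {u x : MvPolynomial σ k} {N : ℕ}
    (hu : MvPolynomial.constantCoeff u ≠ 0) (h : u * x ∈ MvPolynomial.idealOfVars σ k ^ N) :
    x ∈ MvPolynomial.idealOfVars σ k ^ N := by
  set c := MvPolynomial.constantCoeff u
  have hm : u - MvPolynomial.C c ∈ MvPolynomial.idealOfVars σ k := by
    rw [← pow_one (MvPolynomial.idealOfVars σ k), MvPolynomial.mem_pow_idealOfVars_iff']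
    intro γ hγ
    have : γ = 0 := (Finsupp.degree_eq_zero_iff γ).mp (by omega)
    subst this
    simp [c, MvPolynomial.constantCoeff_eq]
  have htop : Ideal.span {u} ⊔ MvPolynomial.idealOfVars σ k = ⊤ := by
    rw [Ideal.eq_top_iff_one]
    have h1 : (1 : MvPolynomial σ k) =
        MvPolynomial.C c⁻¹ * u - MvPolynomial.C c⁻¹ * (u - MvPolynomial.C c) := by
      rw [mul_sub, sub_sub_cancel, ← MvPolynomial.C_mul, inv_mul_cancel₀ hu, MvPolynomial.C_1]
    rw [h1]
    refine Ideal.sub_mem _ ?_ ?_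
    · exact Ideal.mem_sup_left (Ideal.mul_mem_left _ _ (Ideal.mem_span_singleton_self u))
    · exact Ideal.mem_sup_right (Ideal.mul_mem_left _ _ hm)
  have h2 := Ideal.sup_pow_eq_top (n := N) htop
  rw [Ideal.eq_top_iff_one, Submodule.mem_sup] at h2
  obtain ⟨y, hy, z, hz, hyz⟩ := h2
  obtain ⟨w, rfl⟩ := Ideal.mem_span_singleton'.mp hy
  have h3 : x = w * (u * x) + z * x := by linear_combination -x * hyz
  rw [h3]
  exact Ideal.add_mem _ (Ideal.mul_mem_left _ _ h) (Ideal.mul_mem_right _ _ hz)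

lemma eq_zero_of_mem_pow {k σ : Type*} [Field k] {x : MvPolynomial σ k} {N : ℕ}
    (hx : x.totalDegree < N) (h : x ∈ MvPolynomial.idealOfVars σ k ^ N) : x = 0 := by
  rw [MvPolynomial.mem_pow_idealOfVars_iff'] at h
  ext γ
  rw [MvPolynomial.coeff_zero]
  by_cases hγ : γ.degree < N
  · exact h γ hγ
  · exact MvPolynomial.coeff_eq_zero_of_totalDegree_lt (lt_of_lt_of_le hx (not_lt.mp hγ))

lemma det_mem_pow {R α : Type*} [CommRing R] [Fintype α] [DecidableEq α] (J : Ideal R) {τ : ℕ}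
    (M : Matrix α α R) (hM : ∀ i j, M i j ∈ J ^ τ) : M.det ∈ J ^ (τ * Fintype.card α) := by
  rw [Matrix.det_apply]
  refine Ideal.sum_mem _ fun s _ => ?_
  have h1 : ∏ i, M (s i) i ∈ J ^ (τ * Fintype.card α) := by
    have := Ideal.prod_mem_prod (s := Finset.univ) (I := fun _ => J ^ τ)
      (x := fun i => M (s i) i) (fun i _ => hM _ _)
    rwa [Finset.prod_const, ← pow_mul, Finset.card_univ] at this
  rcases Int.units_eq_one_or (Equiv.Perm.sign s) with hs | hs
  · simpa [hs] using h1
  · simpa [hs] using h1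

end PrimeBound

/-! ### Determinantal forms -/

namespace PrimeBound
open Matrix

/-- The determinant of the generic combination `∑ Tᵢ nᵢ` of the square matrices `nᵢ`. -/
noncomputable def detForm {A : Type*} [CommRing A] {D E : ℕ} (N : Fin D → Fin E → Fin E → A) :
    MvPolynomial (Fin D) A :=
  (Matrix.of fun x y => ∑ i, MvPolynomial.X i * MvPolynomial.C (N i x y)).det

lemma eval_detForm {A : Type*} [CommRing A] {D E : ℕ} (N : Fin D → Fin E → Fin E → A)
    (α : Fin D → A) :
    MvPolynomial.eval α (detForm N) = (Matrix.of fun x y => ∑ i, α i * N i x y).det := by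
  rw [detForm, RingHom.map_det]
  congr 1
  ext x y
  simp

lemma map_detForm {A B : Type*} [CommRing A] [CommRing B] (f : A →+* B) {D E : ℕ}
    (N : Fin D → Fin E → Fin E → A) :
    MvPolynomial.map f (detForm N) = detForm fun i x y => f (N i x y) := by
  rw [detForm, RingHom.map_det, detForm]
  congr 1
  ext x y : 2
  simp

lemma totalDegree_detForm_le {A : Type*} [CommRing A] {D E : ℕ} (N : Fin D → Fin E → Fin E → A) :
    (detForm N).totalDegree ≤ E := by
  have h := isDegFilt_totalDegree (Fin D) A
  have hentry : ∀ x y, (∑ i, MvPolynomial.X i * MvPolynomial.C (N i x y) :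
      MvPolynomial (Fin D) A).totalDegree ≤ 1 := by
    intro x y
    refine MvPolynomial.totalDegree_finsetSum_le fun i _ => ?_
    refine (MvPolynomial.totalDegree_mul _ _).trans ?_
    rw [MvPolynomial.totalDegree_C, add_zero]
    rcases subsingleton_or_nontrivial A with hA | hA
    · rw [Subsingleton.elim (MvPolynomial.X i) (0 : MvPolynomial (Fin D) A)]
      simp
    · rw [MvPolynomial.totalDegree_X]
  have := h.det (a := 1)
    (Matrix.of fun x y => ∑ i, MvPolynomial.X i * MvPolynomial.C (N i x y)) hentry
  simpa [detForm] using this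

lemma coeff_detForm_le {A : Type*} [CommRing A] {dl : ℕ → A → Prop} (h : IsDegFilt dl)
    {D E b : ℕ} (N : Fin D → Fin E → Fin E → A) (hN : ∀ i x y, dl b (N i x y))
    (γ : Fin D →₀ ℕ) : dl (E * b) ((detForm N).coeff γ) := by
  classical
  have hentry : ∀ x y γ, dl b (MvPolynomial.coeff γ
      (∑ i, MvPolynomial.X i * MvPolynomial.C (N i x y) : MvPolynomial (Fin D) A)) := by
    intro x y γ
    rw [MvPolynomial.coeff_sum]
    refine h.sum _ _ fun i _ => ?_
    rw [mul_comm, MvPolynomial.coeff_C_mul, MvPolynomial.coeff_X]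
    split_ifs
    · simpa using hN i x y
    · simpa using h.zero' b
  have := (isDegFilt_coeff h (Fin D)).det (a := b)
    (Matrix.of fun x y => ∑ i, MvPolynomial.X i * MvPolynomial.C (N i x y)) hentry γ
  simpa [detForm] using this

/-- When `N i` is `g` times the matrix of the endomorphism `f i`, the determinantal form computes the
determinant of combinations of the `f i`, up to a power of `g`. -/
lemma eval_detForm_toMatrix {K V : Type*} [Field K] [AddCommGroup V] [Module K V] {D E : ℕ}
    (u : Module.Basis (Fin E) K V) (f : Fin D → Module.End K V) (g : K)
    (N : Fin D → Fin E → Fin E → K) (hN : ∀ i x y, N i x y = g * LinearMap.toMatrix u u (f i) x y)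
    (T : Fin D → K) :
    MvPolynomial.eval T (detForm N) = g ^ E * LinearMap.det (∑ i, T i • f i) := by
  rw [eval_detForm, ← LinearMap.det_toMatrix u]
  have : (Matrix.of fun x y => ∑ i, T i * N i x y) =
      g • LinearMap.toMatrix u u (∑ i, T i • f i) := by
    ext x y
    simp only [Matrix.of_apply, hN, map_sum, map_smul, Matrix.smul_apply, Matrix.sum_apply,
      smul_eq_mul, Finset.mul_sum]
    exact Finset.sum_congr rfl fun i _ => by ring
  rw [this, Matrix.det_smul, Fintype.card_fin]

end PrimeBound

namespace PrimeBound
open Matrix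

/-- A generic determinantal form `detForm N` that, up to scalars, divides a form `Φ` with
coefficients of degree at most `δ`, and whose `D` matrices are combinations of only `E < D` matrices
over the fraction field, has a nontrivial zero of small degree: a zero to high order at a point
forces a zero, because the primitive part of `detForm N` inherits the degree bound of `Φ`. -/
lemma exists_zero_detForm {k : Type*} {σ : Type} [Field k] [Infinite k] [Fintype σ] {D E δ : ℕ}
    (hE : E < D) (hE0 : 0 < E) (N : Fin D → Fin E → Fin E → MvPolynomial σ k) (G : MvPolynomial σ k)
    (hG : G ≠ 0) (q : Fin D → Fin E → MvPolynomial σ k)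
    (m : Fin E → Fin E → Fin E → MvPolynomial σ k)
    (hN : ∀ i x y, G * N i x y = ∑ l, q i l * m l x y)
    (Φ φ₂ : MvPolynomial (Fin D) (MvPolynomial σ k)) (hΦ : Φ ≠ 0)
    (hδ : ∀ μ, (Φ.coeff μ).totalDegree ≤ δ) (c : MvPolynomial σ k) (hc : c ≠ 0)
    (h : MvPolynomial.C c * Φ = detForm N * φ₂) :
    ∃ α : Fin D → MvPolynomial σ k, α ≠ 0 ∧ (∀ i, (α i).totalDegree ≤ Fintype.card σ * D * δ) ∧
      MvPolynomial.eval α (detForm N) = 0 := by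
  obtain ⟨c₁, ψ₁, ψ₂, hc₁, hψ₁, hψ⟩ := gauss_factor c hc Φ (detForm N) φ₂ h
  have hψdeg : ∀ μ, (ψ₁.coeff μ).totalDegree ≤ δ := coeff_totalDegree_factor_le hΦ hψ hδ
  have hψE : ψ₁.totalDegree ≤ E := by
    by_cases h0 : ψ₁ = 0
    · simp [h0]
    · have := totalDegree_detForm_le N
      rw [← hψ₁, MvPolynomial.totalDegree_mul_of_isDomain (by simpa using hc₁) h0] at this
      omega
  -- a point `p` off the zeros of the denominators; `θ` translates it to the origin
  obtain ⟨p, hp⟩ : ∃ p : σ → k, MvPolynomial.eval p (G * c₁) ≠ 0 := by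
    by_contra! hcon
    exact mul_ne_zero hG hc₁ (MvPolynomial.funext fun x => by rw [hcon x, map_zero])
  let θ : MvPolynomial σ k →ₐ[k] MvPolynomial σ k :=
    MvPolynomial.aeval fun i => MvPolynomial.X i + MvPolynomial.C (p i)
  let θ' : MvPolynomial σ k →ₐ[k] MvPolynomial σ k :=
    MvPolynomial.aeval fun i => MvPolynomial.X i - MvPolynomial.C (p i)
  have hθ' : ∀ x, θ' (θ x) = x := by
    intro x
    have : θ'.comp θ = AlgHom.id k _ := by
      ext i
      simp [θ, θ', MvPolynomial.algHom_C]
    exact DFunLike.congr_fun this x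
  have hθc : ∀ x, MvPolynomial.constantCoeff (θ x) = MvPolynomial.eval p x := by
    intro x
    have : (MvPolynomial.constantCoeff.comp (θ : MvPolynomial σ k →+* MvPolynomial σ k)) =
        MvPolynomial.eval p := by
      ext i
      · simp [θ]
      · simp [θ]
    exact DFunLike.congr_fun this x
  have hθd : ∀ x, (θ x).totalDegree ≤ x.totalDegree := fun x =>
    totalDegree_aeval_le _ (fun i => (MvPolynomial.totalDegree_add _ _).trans (by simp)) x
  obtain ⟨α, hα0, hαt, hα⟩ := exists_high_order (t := Fintype.card σ * D * δ) (δ := δ) hE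
    (by rw [mul_comm (D * δ), ← mul_assoc]; omega) θ q
  refine ⟨α, hα0, hαt, ?_⟩
  set t := Fintype.card σ * D * δ with ht
  -- all matrix entries vanish to order `t + δ + 1` at `p`, hence the determinant to order
  -- `(t + δ + 1) * E`
  have hmem : θ (G ^ E * MvPolynomial.eval α (detForm N)) ∈
      MvPolynomial.idealOfVars σ k ^ ((t + δ + 1) * E) := by
    have h1 : G ^ E * MvPolynomial.eval α (detForm N) =
        (G • Matrix.of fun x y => ∑ i, α i * N i x y).det := by
      rw [Matrix.det_smul, Fintype.card_fin, eval_detForm]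
    rw [h1, AlgHom.map_det]
    have := det_mem_pow (MvPolynomial.idealOfVars σ k) (τ := t + δ + 1)
      (θ.mapMatrix (G • Matrix.of fun x y => ∑ i, α i * N i x y)) ?_
    · simpa using this
    intro x y
    have h2 : G * ∑ i, α i * N i x y = ∑ l, (∑ i, α i * q i l) * m l x y := by
      simp only [Finset.mul_sum, Finset.sum_mul]
      rw [Finset.sum_comm]
      refine Finset.sum_congr rfl fun i _ => ?_
      rw [mul_left_comm, hN, Finset.mul_sum]
      exact Finset.sum_congr rfl fun l _ => by ring
    have h3 : (θ.mapMatrix (G • Matrix.of fun x y => ∑ i, α i * N i x y)) x y =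
        θ (G * ∑ i, α i * N i x y) := by
      simp [AlgHom.mapMatrix_apply]
    rw [h3, h2, map_sum]
    refine Ideal.sum_mem _ fun l _ => ?_
    rw [map_mul]
    exact Ideal.mul_mem_right _ _ (hα l)
  -- the order of vanishing exceeds the degree, which is at most `δ + E * t`
  have hz : θ (MvPolynomial.eval α ψ₁) = 0 := by
    refine eq_zero_of_mem_pow (N := (t + δ + 1) * E) ?_
      (mem_pow_of_mul_mem (u := θ (G ^ E * c₁)) ?_ ?_)
    · refine lt_of_le_of_lt ((hθd _).trans (totalDegree_eval_le ψ₁ hψdeg hψE α hαt)) ?_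
      nlinarith
    · rw [hθc, map_mul, map_pow]
      rw [map_mul] at hp
      exact mul_ne_zero (pow_ne_zero _ (left_ne_zero_of_mul hp)) (right_ne_zero_of_mul hp)
    · have h1 : c₁ * MvPolynomial.eval α ψ₁ = MvPolynomial.eval α (detForm N) := by
        rw [← hψ₁, map_mul, MvPolynomial.eval_C]
      rw [← map_mul, mul_assoc, h1]
      exact hmem
  have hz' : MvPolynomial.eval α ψ₁ = 0 := by rw [← hθ' (MvPolynomial.eval α ψ₁), hz, map_zero]
  rw [← hψ₁, map_mul, hz', mul_zero]

end PrimeBound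

/-! ### Nonunits of small degree in finite-dimensional algebras -/

namespace PrimeBound
open Matrix

lemma exists_common_denom {A K ι : Type*} [CommRing A] [IsDomain A] [Field K] [Algebra A K]
    [IsFractionRing A K] [Finite ι] (f : ι → K) :
    ∃ (g : A) (f' : ι → A), g ≠ 0 ∧ ∀ i, algebraMap A K (f' i) = algebraMap A K g * f i := by
  obtain ⟨b, hb⟩ := IsLocalization.exist_integer_multiples_of_finite (nonZeroDivisors A) f
  choose f' hf' using hb
  exact ⟨b, f', nonZeroDivisors.ne_zero b.2, fun i => by rw [hf' i, Algebra.smul_def]⟩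

/-- A finite-dimensional algebra `L` over `k(σ)` that is not a field contains a nonzero nonunit whose
coordinates are polynomials of bounded degree. If `J` is a proper nonzero ideal, the norm form of `L`
is the product of the determinants of the actions on `J` and on `L ⧸ J`. The action on `L ⧸ J` is
given by fewer than `D` matrices, so `exists_zero_detForm` produces a small element acting on
`L ⧸ J` with determinant zero, and such an element is not invertible. -/
theorem exists_small_nonunit {k K L : Type*} {σ : Type} [Field k] [Infinite k] [Fintype σ]
    [Field K] [Algebra (MvPolynomial σ k) K] [IsFractionRing (MvPolynomial σ k) K]
    [CommRing L] [Nontrivial L] [Algebra K L] {D h : ℕ} (v : Module.Basis (Fin D) K L)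
    (s : MvPolynomial σ k) (hs : s ≠ 0) (a : Fin D → Fin D → Fin D → MvPolynomial σ k)
    (ha : ∀ i j, algebraMap _ K s • (v i * v j) = ∑ l, algebraMap _ K (a i j l) • v l)
    (hdeg : ∀ i j l, (a i j l).totalDegree ≤ h) (hL : ¬ IsField L) :
    ∃ α : Fin D → MvPolynomial σ k, α ≠ 0 ∧
      (∀ i, (α i).totalDegree ≤ Fintype.card σ * D * (D * h)) ∧
      ¬ IsUnit (∑ i, algebraMap _ K (α i) • v i) := by
  classical
  have hinj : Function.Injective (algebraMap (MvPolynomial σ k) K) := IsFractionRing.injective _ _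
  have : Module.Finite K L := Module.Finite.of_basis v
  have : Infinite K := Infinite.of_injective
    (fun x : k => algebraMap (MvPolynomial σ k) K (MvPolynomial.C x))
    (hinj.comp (MvPolynomial.C_injective σ k))
  obtain ⟨J, hJ0, hJ1⟩ := (Ring.not_isField_iff_exists_ideal_bot_lt_and_lt_top).mp hL
  set W : Submodule K L := J.restrictScalars K with hWdef
  have hW : ∀ f : L, W ≤ W.comap (LinearMap.mulLeft K f) := fun f x hx => J.mul_mem_left f hx
  -- the action `ρ` of `L` on `L ⧸ J`, followed by the one of `L` on `J` itself
  let ρ : L →ₗ[K] Module.End K (L ⧸ W) :=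
    { toFun := fun f => W.mapQ W (LinearMap.mulLeft K f) (hW f)
      map_add' := fun f g => by
        ext x
        simp [add_mul]
      map_smul' := fun c f => by
        ext x
        simp }
  let ρ' : L →ₗ[K] Module.End K W :=
    { toFun := fun f => (LinearMap.mulLeft K f).restrict (hW f)
      map_add' := fun f g => by
        ext x
        simp [add_mul]
      map_smul' := fun c f => by
        ext x
        simp }
  have hdet : ∀ f : L, LinearMap.det (LinearMap.mulLeft K f) =
      LinearMap.det (ρ' f) * LinearMap.det (ρ f) := fun f =>
    LinearMap.det_eq_det_mul_det W (LinearMap.mulLeft K f) (hW f)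
  have hρmul : ∀ f g, ρ (f * g) = ρ f * ρ g := by
    intro f g
    ext x
    simp [ρ]
  have hρone : ρ 1 = 1 := by
    ext x
    simp [ρ]
  have hρW : ∀ f ∈ W, ρ f = 0 := by
    intro f hf
    ext x
    have : f * x ∈ W := J.mul_mem_right x hf
    simpa [ρ, Submodule.Quotient.mk_eq_zero] using this
  set E := Module.finrank K (L ⧸ W) with hE
  set E' := Module.finrank K W with hE'
  have hDrank : Module.finrank K L = D := by simpa using Module.finrank_eq_card_basis v
  have hsum : E + E' = D := by rw [← hDrank]; exact W.finrank_quotient_add_finrank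
  have hWbot : W ≠ ⊥ := by
    intro h0
    exact hJ0.ne' ((Submodule.restrictScalars_eq_bot_iff K L L).mp h0)
  have hWtop : W ≠ ⊤ := by
    intro h0
    exact hJ1.ne ((Submodule.restrictScalars_eq_top_iff K L L).mp h0)
  have hE'0 : 0 < E' := by
    rw [Nat.pos_iff_ne_zero]
    intro h0
    exact hWbot (Submodule.finrank_eq_zero.mp h0)
  have hE0 : 0 < E := by
    rw [Nat.pos_iff_ne_zero]
    intro h0
    refine hWtop (Submodule.eq_top_of_finrank_eq ?_)
    omega
  let u : Module.Basis (Fin E) K (L ⧸ W) := Module.finBasis K (L ⧸ W)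
  let u' : Module.Basis (Fin E') K W := Module.finBasis K W
  choose ut hut using fun l => Submodule.mkQ_surjective W (u l)
  -- `ρ` factors through `L ⧸ J`, so only `E < D` matrices are involved
  have hρv : ∀ i, ρ (v i) = ∑ l, u.repr (W.mkQ (v i)) l • ρ (ut l) := by
    intro i
    have hmem : v i - ∑ l, u.repr (W.mkQ (v i)) l • ut l ∈ W := by
      refine (Submodule.Quotient.mk_eq_zero W).mp ?_
      rw [← Submodule.mkQ_apply, map_sub, map_sum]
      simp only [map_smul, hut]
      rw [u.sum_repr, sub_self]
    have := hρW _ hmem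
    rw [map_sub, map_sum, sub_eq_zero] at this
    simpa only [map_smul] using this
  -- clearing denominators in the two actions and in the coordinates on `L ⧸ J`
  obtain ⟨g₁, N, hg₁, hN⟩ := exists_common_denom (A := MvPolynomial σ k)
    (fun x : Fin D × Fin E × Fin E => LinearMap.toMatrix u u (ρ (v x.1)) x.2.1 x.2.2)
  obtain ⟨g₂, N', hg₂, hN'⟩ := exists_common_denom (A := MvPolynomial σ k)
    (fun x : Fin D × Fin E' × Fin E' => LinearMap.toMatrix u' u' (ρ' (v x.1)) x.2.1 x.2.2)
  obtain ⟨g₃, q, hg₃, hq⟩ := exists_common_denom (A := MvPolynomial σ k)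
    (fun x : Fin D × Fin E => u.repr (W.mkQ (v x.1)) x.2)
  obtain ⟨g₄, m, hg₄, hm⟩ := exists_common_denom (A := MvPolynomial σ k)
    (fun x : Fin E × Fin E × Fin E => LinearMap.toMatrix u u (ρ (ut x.1)) x.2.1 x.2.2)
  have hΦeval : ∀ T : Fin D → K, MvPolynomial.eval T (MvPolynomial.map (algebraMap _ K)
      (detForm fun i x y => a i y x)) =
        algebraMap _ K s ^ D * LinearMap.det (LinearMap.mulLeft K (∑ i, T i • v i)) := by
    intro T
    have h1 : LinearMap.mulLeft K (∑ i, T i • v i) = ∑ i, T i • LinearMap.mulLeft K (v i) := by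
      ext x
      simp [Finset.sum_mul]
    rw [map_detForm, h1]
    refine eval_detForm_toMatrix v (fun i => LinearMap.mulLeft K (v i)) _ _ (fun i x y => ?_) T
    rw [LinearMap.toMatrix_apply, LinearMap.mulLeft_apply]
    have := congrArg (fun z => v.repr z x) (ha i y)
    simp only [map_smul, map_sum, Finsupp.smul_apply, Finsupp.finsetSum_apply,
      Module.Basis.repr_self, Finsupp.single_apply, smul_eq_mul] at this
    rw [this]
    simp
  have hφ₁eval : ∀ T : Fin D → K, MvPolynomial.eval T (MvPolynomial.map (algebraMap _ K)
      (detForm fun i x y => N (i, x, y))) =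
        algebraMap _ K g₁ ^ E * LinearMap.det (ρ (∑ i, T i • v i)) := by
    intro T
    rw [map_detForm, map_sum]
    simp only [map_smul]
    exact eval_detForm_toMatrix u (fun i => ρ (v i)) _ _ (fun i x y => hN (i, x, y)) T
  have hφ₂eval : ∀ T : Fin D → K, MvPolynomial.eval T (MvPolynomial.map (algebraMap _ K)
      (detForm fun i x y => N' (i, x, y))) =
        algebraMap _ K g₂ ^ E' * LinearMap.det (ρ' (∑ i, T i • v i)) := by
    intro T
    rw [map_detForm, map_sum]
    simp only [map_smul]
    exact eval_detForm_toMatrix u' (fun i => ρ' (v i)) _ _ (fun i x y => hN' (i, x, y)) T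
  have hG : ∀ i x y, g₃ * g₄ * N (i, x, y) = ∑ l, q (i, l) * (g₁ * m (l, x, y)) := by
    intro i x y
    apply hinj
    simp only [map_mul, map_sum, hN, hq, hm, hρv i, map_smul, Matrix.smul_apply, Matrix.sum_apply,
      smul_eq_mul, Finset.mul_sum]
    exact Finset.sum_congr rfl fun l _ => by ring
  have hΦ0 : (detForm fun i x y => a i y x) ≠ 0 := by
    intro h0
    have h1 := hΦeval (v.repr 1)
    rw [h0, map_zero, map_zero, v.sum_repr, LinearMap.mulLeft_one, LinearMap.det_id, mul_one] at h1
    exact hs (hinj (by rw [map_zero]; exact eq_zero_of_pow_eq_zero h1.symm))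
  have hfac : MvPolynomial.C (g₁ ^ E * g₂ ^ E') * (detForm fun i x y => a i y x) =
      (detForm fun i x y => N (i, x, y)) *
        (MvPolynomial.C (s ^ D) * detForm fun i x y => N' (i, x, y)) := by
    apply MvPolynomial.map_injective _ hinj
    refine MvPolynomial.funext fun T => ?_
    simp only [map_mul, MvPolynomial.map_C, MvPolynomial.eval_C, hΦeval, hφ₁eval, hφ₂eval, map_pow,
      hdet]
    ring
  obtain ⟨α, hα0, hαdeg, hα⟩ := exists_zero_detForm (δ := D * h) (by omega : E < D) hE0
    (fun i x y => N (i, x, y)) (g₃ * g₄) (mul_ne_zero hg₃ hg₄) (fun i l => q (i, l))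
    (fun l x y => g₁ * m (l, x, y)) hG _ _ hΦ0
    (coeff_detForm_le (isDegFilt_totalDegree σ k) _ fun i x y => hdeg i y x) (g₁ ^ E * g₂ ^ E')
    (mul_ne_zero (pow_ne_zero _ hg₁) (pow_ne_zero _ hg₂)) hfac
  refine ⟨α, hα0, hαdeg, fun hunit => ?_⟩
  have h0 := hφ₁eval fun i => algebraMap _ K (α i)
  have h1 : MvPolynomial.eval (fun i => algebraMap _ K (α i)) (MvPolynomial.map (algebraMap _ K)
      (detForm fun i x y => N (i, x, y))) = algebraMap _ K (MvPolynomial.eval α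
        (detForm fun i x y => N (i, x, y))) := by
    rw [MvPolynomial.eval_map, MvPolynomial.eval₂_comp]
    rfl
  rw [h1, hα, map_zero, eq_comm, mul_eq_zero] at h0
  rcases h0 with h0 | h0
  · exact hg₁ (hinj (by rw [map_zero]; exact eq_zero_of_pow_eq_zero h0))
  · obtain ⟨y, hy⟩ := hunit.exists_right_inv
    have h2 := congrArg LinearMap.det (hρmul (∑ i, algebraMap _ K (α i) • v i) y)
    rw [hy, hρone, map_mul, h0, zero_mul, map_one] at h2
    exact one_ne_zero h2

end PrimeBound

/-! ### Ideals over a polynomial ring with algebraic variables -/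

namespace PrimeBound

attribute [local instance] MvPolynomial.algebraMvPolynomial

/-- The extension of `I` to the fraction field consists, on integral polynomials, of those that have
a nonzero constant multiple in `I`. -/
lemma map_mem_map_iff {A K τ : Type*} [CommRing A] [IsDomain A] [Field K] [Algebra A K]
    [IsFractionRing A K] (I : Ideal (MvPolynomial τ A)) (f : MvPolynomial τ A) :
    MvPolynomial.map (algebraMap A K) f ∈ I.map (MvPolynomial.map (algebraMap A K)) ↔
      ∃ c : A, c ≠ 0 ∧ MvPolynomial.C c * f ∈ I := by
  have h1 := IsLocalization.mk'_mem_map_algebraMap_iff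
    ((nonZeroDivisors A).map (MvPolynomial.C (σ := τ))) (MvPolynomial τ K) I f 1
  rw [IsLocalization.mk'_one, MvPolynomial.algebraMap_def] at h1
  rw [h1]
  constructor
  · rintro ⟨_, ⟨c, hc, rfl⟩, h⟩
    exact ⟨c, nonZeroDivisors.ne_zero hc, h⟩
  · rintro ⟨c, hc, h⟩
    exact ⟨_, ⟨c, mem_nonZeroDivisors_of_ne_zero hc, rfl⟩, h⟩

lemma exists_C_mul_eq_map {A K τ : Type*} [CommRing A] [IsDomain A] [Field K] [Algebra A K]
    [IsFractionRing A K] (z : MvPolynomial τ K) : ∃ (c : A) (f : MvPolynomial τ A), c ≠ 0 ∧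
      MvPolynomial.C (algebraMap A K c) * z = MvPolynomial.map (algebraMap A K) f := by
  obtain ⟨⟨f, ⟨_, c, hc, rfl⟩⟩, h⟩ := IsLocalization.surj
    ((nonZeroDivisors A).map (MvPolynomial.C (σ := τ))) z
  refine ⟨c, f, nonZeroDivisors.ne_zero hc, ?_⟩
  rw [MvPolynomial.algebraMap_def] at h
  rw [← h, mul_comm]
  simp

/-- An element killed by a polynomial of degree between `1` and `e` has all its powers in the span
of the first `e` ones. -/
lemma exists_pow_eq_sum {K L : Type*} [Field K] [CommRing L] [Algebra K L] {e : ℕ} (y : L)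
    (q : Polynomial K) (hq : 0 < q.natDegree) (hqe : q.natDegree ≤ e)
    (hy : Polynomial.aeval y q = 0) (r : ℕ) :
    ∃ a : Fin e → K, y ^ r = ∑ i, a i • y ^ (i : ℕ) := by
  have hlt : ((Polynomial.X : Polynomial K) ^ r % q).natDegree < e :=
    (Polynomial.natDegree_mod_lt _ hq.ne').trans_le hqe
  refine ⟨fun i => (Polynomial.X ^ r % q).coeff i, ?_⟩
  have h1 : y ^ r = Polynomial.aeval y (Polynomial.X ^ r % q) := by
    have := congrArg (Polynomial.aeval y) (EuclideanDomain.div_add_mod (Polynomial.X ^ r) q)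
    rw [map_add, map_mul, hy, zero_mul, zero_add] at this
    rw [this]
    simp
  rw [h1, Polynomial.aeval_eq_sum_range' hlt, Finset.sum_range]

/-- An algebra generated by `m` elements, each a root of a nonconstant polynomial of degree at most
`e`, has a basis of at most `e ^ m` monomials in these generators, of degree at most `m * e`. -/
lemma exists_monomial_basis {K L : Type*} [Field K] [CommRing L] [Algebra K L] {m e : ℕ}
    (y : Fin m → L) (hy : ∀ j, ∃ q : Polynomial K, 0 < q.natDegree ∧ q.natDegree ≤ e ∧
      Polynomial.aeval (y j) q = 0)
    (hsurj : Function.Surjective (MvPolynomial.aeval y : MvPolynomial (Fin m) K →ₐ[K] L)) :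
    ∃ (D : ℕ) (μ : Fin D → Fin m →₀ ℕ) (v : Module.Basis (Fin D) K L), D ≤ e ^ m ∧
      (∀ i, (μ i).degree ≤ m * e) ∧
      ∀ i, v i = MvPolynomial.aeval y (MvPolynomial.monomial (μ i) (1 : K)) := by
  classical
  let w : (Fin m → Fin e) → L := fun x => ∏ j, y j ^ (x j : ℕ)
  have hspan : ⊤ ≤ Submodule.span K (Set.range w) := by
    intro z _
    obtain ⟨p, rfl⟩ := hsurj z
    induction p using MvPolynomial.induction_on' with
    | add p q hp hq => rw [map_add]; exact Submodule.add_mem _ (hp trivial) (hq trivial)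
    | monomial γ c =>
      choose q hq0 hqe hq using hy
      choose a ha using fun j => exists_pow_eq_sum (y j) (q j) (hq0 j) (hqe j) (hq j) (γ j)
      rw [MvPolynomial.aeval_monomial, Finsupp.prod_fintype _ _ (by simp)]
      simp only [ha]
      rw [Finset.prod_univ_sum, ← Algebra.smul_def]
      refine Submodule.smul_mem _ _ (Submodule.sum_mem _ fun x _ => ?_)
      have : ∏ j, a j (x j) • y j ^ (x j : ℕ) = (∏ j, a j (x j)) • w x := by
        simp only [Algebra.smul_def, Finset.prod_mul_distrib, map_prod, w]
      rw [this]
      exact Submodule.smul_mem _ _ (Submodule.subset_span ⟨x, rfl⟩)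
  obtain ⟨κ, a, ha, hs, hli⟩ := exists_linearIndependent' K w
  have : Finite κ := Finite.of_injective a ha
  have : Fintype κ := Fintype.ofFinite κ
  let b : Module.Basis κ K L := Module.Basis.mk hli (by rw [hs]; exact hspan)
  let ε := Fintype.equivFin κ
  refine ⟨Fintype.card κ, fun i => Finsupp.equivFunOnFinite.symm fun j => (a (ε.symm i) j : ℕ),
    b.reindex ε, ?_, fun i => ?_, fun i => ?_⟩
  · simpa using Fintype.card_le_of_injective a ha
  · rw [Finsupp.degree_eq_sum]
    calc ∑ j, (a (ε.symm i) j : ℕ) ≤ ∑ _j : Fin m, e := Finset.sum_le_sum fun j _ => (a _ j).2.le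
      _ = m * e := by simp
  · rw [MvPolynomial.aeval_monomial, Finsupp.prod_fintype _ _ (by simp)]
    simp [b, w]

end PrimeBound

namespace PrimeBound

/-- From relations `c_μ y^μ ≡ ∑ b_{μk} v_k` for all exponents `μ` of degree at most `E`, a common
multiplier: `s y^μ ≡ ∑ a_{μk} v_k` with one `s` for all `μ`. -/
lemma exists_uniform_multiplier {A : Type*} [CommRing A] [IsDomain A] {dl : ℕ → A → Prop}
    (h : IsDegFilt dl) {m D E H : ℕ} (I : Ideal (MvPolynomial (Fin m) A))
    (v : Fin D → MvPolynomial (Fin m) A)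
    (hrel : ∀ μ : Fin m →₀ ℕ, μ.degree ≤ E → ∃ (c : A) (b : Fin D → A), c ≠ 0 ∧ dl H c ∧
      (∀ k, dl H (b k)) ∧
      MvPolynomial.C c * MvPolynomial.monomial μ 1 - ∑ k, MvPolynomial.C (b k) * v k ∈ I) :
    ∃ s : A, s ≠ 0 ∧ dl ((E + 1) ^ m * H) s ∧ ∀ μ : Fin m →₀ ℕ, μ.degree ≤ E →
      ∃ a : Fin D → A, (∀ k, dl ((E + 1) ^ m * H) (a k)) ∧
        MvPolynomial.C s * MvPolynomial.monomial μ 1 - ∑ k, MvPolynomial.C (a k) * v k ∈ I := by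
  classical
  have hrel' : ∀ μ : Fin m →₀ ℕ, ∃ (c : A) (b : Fin D → A), c ≠ 0 ∧ dl H c ∧
      (∀ k, dl H (b k)) ∧ (μ.degree ≤ E →
      MvPolynomial.C c * MvPolynomial.monomial μ 1 - ∑ k, MvPolynomial.C (b k) * v k ∈ I) := by
    intro μ
    by_cases hμ : μ.degree ≤ E
    · obtain ⟨c, b, h1, h2, h3, h4⟩ := hrel μ hμ
      exact ⟨c, b, h1, h2, h3, fun _ => h4⟩
    · exact ⟨1, 0, one_ne_zero, h.one' _, fun _ => h.zero' _, fun h' => absurd h' hμ⟩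
  choose c b hc hcd hbd hcb using hrel'
  have hcard : (Finset.univ : Finset (Fin m → Fin (E + 1))).card = (E + 1) ^ m := by simp
  refine ⟨∏ x : Fin m → Fin (E + 1), c (boxExp x), Finset.prod_ne_zero_iff.mpr fun x _ => hc _,
    ?_, fun μ hμ => ?_⟩
  · rw [← hcard]
    exact h.prod _ _ fun x _ => hcd _
  · obtain ⟨x, rfl⟩ := exists_boxExp μ fun i => (Finsupp.le_degree i μ).trans hμ
    set r := ∏ x' ∈ Finset.univ.erase x, c (boxExp x') with hr
    refine ⟨fun k => r * b (boxExp x) k, fun k => ?_, ?_⟩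
    · have h1 := h.mul (h.prod (Finset.univ.erase x) (fun x' => c (boxExp x')) fun x' _ => hcd _)
        (hbd (boxExp x) k)
      rw [Finset.card_erase_of_mem (Finset.mem_univ x), hcard] at h1
      have h2 : 0 < (E + 1) ^ m := by positivity
      have h3 : ((E + 1) ^ m - 1) * H + H = (E + 1) ^ m * H := by
        obtain ⟨z, hz⟩ : ∃ z, (E + 1) ^ m = z + 1 := ⟨_, (Nat.sub_add_cancel h2).symm⟩
        rw [hz, Nat.add_sub_cancel]
        ring
      rwa [h3] at h1
    · have h1 := I.mul_mem_left (MvPolynomial.C r) (hcb (boxExp x) hμ)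
      rw [← Finset.prod_erase_mul _ _ (Finset.mem_univ x)]
      convert h1 using 1
      rw [mul_sub, Finset.mul_sum, MvPolynomial.C_mul]
      simp only [MvPolynomial.C_mul, mul_assoc]
      rfl

/-- Under the multiplier `s`, every polynomial becomes a combination of the `v_k`. -/
lemma exists_pow_mul_eq {A : Type*} [CommRing A] {m D E : ℕ} (I : Ideal (MvPolynomial (Fin m) A))
    (ν : Fin D → Fin m →₀ ℕ) (hν : ∀ i, (ν i).degree + 1 ≤ E) (s : A)
    (hs : ∀ μ : Fin m →₀ ℕ, μ.degree ≤ E → ∃ a : Fin D → A,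
      MvPolynomial.C s * MvPolynomial.monomial μ 1 -
        ∑ k, MvPolynomial.C (a k) * MvPolynomial.monomial (ν k) 1 ∈ I)
    (f : MvPolynomial (Fin m) A) : ∃ (N : ℕ) (a : Fin D → A),
      MvPolynomial.C (s ^ N) * f - ∑ k, MvPolynomial.C (a k) * MvPolynomial.monomial (ν k) 1 ∈ I := by
  induction f using MvPolynomial.induction_on with
  | C c =>
    obtain ⟨a, ha⟩ := hs 0 (by simp)
    refine ⟨1, fun k => c * a k, ?_⟩
    convert I.mul_mem_left (MvPolynomial.C c) ha using 1
    rw [mul_sub, Finset.mul_sum]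
    simp only [MvPolynomial.C_mul, mul_assoc, pow_one]
    congr 1
    rw [mul_comm]
    rw [show (MvPolynomial.monomial 0 (1 : A) : MvPolynomial (Fin m) A) = 1 from rfl, mul_one]
  | add p q hp hq =>
    obtain ⟨N, a, ha⟩ := hp
    obtain ⟨N', a', ha'⟩ := hq
    refine ⟨N + N', fun k => s ^ N' * a k + s ^ N * a' k, ?_⟩
    convert I.add_mem (I.mul_mem_left (MvPolynomial.C (s ^ N')) ha)
      (I.mul_mem_left (MvPolynomial.C (s ^ N)) ha') using 1
    simp only [mul_sub, Finset.mul_sum, MvPolynomial.C_mul, MvPolynomial.C_add, add_mul,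
      Finset.sum_add_distrib, pow_add, mul_assoc]
    ring
  | mul_X p j hp =>
    obtain ⟨N, a, ha⟩ := hp
    have hb : ∀ k, ∃ b : Fin D → A,
      MvPolynomial.C s * (MvPolynomial.monomial (ν k) 1 * MvPolynomial.X j) -
        ∑ l, MvPolynomial.C (b l) * MvPolynomial.monomial (ν l) 1 ∈ I := by
      intro k
      obtain ⟨b, hb⟩ := hs (ν k + Finsupp.single j 1) (by simpa using hν k)
      refine ⟨b, ?_⟩
      rwa [MvPolynomial.X, MvPolynomial.monomial_mul, mul_one]
    choose b hb using hb
    refine ⟨N + 1, fun l => ∑ k, a k * b k l, ?_⟩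
    have h1 := I.mul_mem_left (MvPolynomial.C s * MvPolynomial.X j) ha
    have h2 := I.sum_mem (t := Finset.univ)
      fun k _ => I.mul_mem_left (MvPolynomial.C (a k)) (hb k)
    convert I.add_mem h1 h2 using 1
    have h3 : ∑ l, MvPolynomial.C (∑ k, a k * b k l) * MvPolynomial.monomial (ν l) (1 : A) =
        ∑ k, MvPolynomial.C (a k) * ∑ l, MvPolynomial.C (b k l) * MvPolynomial.monomial (ν l) 1 := by
      simp only [map_sum, Finset.sum_mul, Finset.mul_sum, map_mul]
      rw [Finset.sum_comm]
      exact Finset.sum_congr rfl fun _ _ => Finset.sum_congr rfl fun _ _ => by ring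
    have h4 : MvPolynomial.C s * MvPolynomial.X j *
        ∑ k, MvPolynomial.C (a k) * MvPolynomial.monomial (ν k) (1 : A) =
        ∑ k, MvPolynomial.C (a k) * (MvPolynomial.C s *
          (MvPolynomial.monomial (ν k) 1 * MvPolynomial.X j)) := by
      rw [Finset.mul_sum]
      exact Finset.sum_congr rfl fun _ _ => by ring
    simp only [mul_sub, Finset.sum_sub_distrib]
    rw [h3, h4, pow_succ, MvPolynomial.C_mul]
    ring

end PrimeBound

namespace PrimeBound

/-- The coordinate algebra `L` of `I` over the fraction field `K` of the coefficient ring is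
finite-dimensional, with a basis of monomials, as soon as every variable is algebraic. -/
lemma exists_basis_quotient {A : Type*} [CommRing A] [IsDomain A] (K : Type*) [Field K]
    [Algebra A K] [IsFractionRing A K] {m e : ℕ} (I : Ideal (MvPolynomial (Fin m) A))
    (H0 : ∀ a, MvPolynomial.C a ∈ I → a = 0)
    (H1 : ∀ j, ∃ q : Polynomial A, q ≠ 0 ∧ q.natDegree ≤ e ∧
      Polynomial.aeval (MvPolynomial.X j : MvPolynomial (Fin m) A) q ∈ I) :
    I.map (MvPolynomial.map (algebraMap A K)) ≠ ⊤ ∧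
    ∃ (D : ℕ) (ν : Fin D → Fin m →₀ ℕ) (v : Module.Basis (Fin D) K
      (MvPolynomial (Fin m) K ⧸ I.map (MvPolynomial.map (algebraMap A K)))), D ≤ e ^ m ∧
      (∀ i, (ν i).degree ≤ m * e) ∧
      (∀ i, v i = Ideal.Quotient.mkₐ K _ (MvPolynomial.monomial (ν i) (1 : K))) ∧
      ∀ a : Fin D → A, Ideal.Quotient.mkₐ K _ (MvPolynomial.map (algebraMap A K)
        (∑ k, MvPolynomial.C (a k) * MvPolynomial.monomial (ν k) 1)) =
          ∑ k, algebraMap A K (a k) • v k := by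
  classical
  have hinj : Function.Injective (algebraMap A K) := IsFractionRing.injective A K
  let φ : MvPolynomial (Fin m) A →+* MvPolynomial (Fin m) K := MvPolynomial.map (algebraMap A K)
  let Ie : Ideal (MvPolynomial (Fin m) K) := I.map φ
  have hIe : ∀ f, φ f ∈ Ie ↔ ∃ c : A, c ≠ 0 ∧ MvPolynomial.C c * f ∈ I := map_mem_map_iff I
  let L := MvPolynomial (Fin m) K ⧸ Ie
  let π : MvPolynomial (Fin m) K →ₐ[K] L := Ideal.Quotient.mkₐ K Ie
  have hπ : ∀ z, π z = 0 ↔ z ∈ Ie := fun z => Ideal.Quotient.eq_zero_iff_mem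
  have hsmul : ∀ (c : K) (z : MvPolynomial (Fin m) K), c • π z = π (MvPolynomial.C c * z) := by
    intro c z
    rw [← MvPolynomial.smul_eq_C_mul, map_smul]
  have hIetop : Ie ≠ ⊤ := by
    intro h
    have h1 : φ 1 ∈ Ie := by rw [h]; trivial
    obtain ⟨c, hc, hcI⟩ := (hIe 1).mp h1
    exact hc (H0 c (by simpa using hcI))
  let y : Fin m → L := fun j => π (MvPolynomial.X j)
  have hy : ∀ z : MvPolynomial (Fin m) K, MvPolynomial.aeval y z = π z := by
    intro z
    have : (MvPolynomial.aeval y : MvPolynomial (Fin m) K →ₐ[K] L) = π := by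
      ext j
      simp [y]
    rw [this]
  have halg : ∀ j, ∃ q : Polynomial K, 0 < q.natDegree ∧ q.natDegree ≤ e ∧
      Polynomial.aeval (y j) q = 0 := by
    intro j
    obtain ⟨q, hq0, hqe, hq⟩ := H1 j
    refine ⟨q.map (algebraMap A K), ?_, ?_, ?_⟩
    · rw [Polynomial.natDegree_map_eq_of_injective hinj, Nat.pos_iff_ne_zero]
      intro h0
      rw [Polynomial.eq_C_of_natDegree_eq_zero h0, Polynomial.aeval_C] at hq
      refine hq0 ?_
      rw [Polynomial.eq_C_of_natDegree_eq_zero h0, H0 _ hq, Polynomial.C_0]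
    · rwa [Polynomial.natDegree_map_eq_of_injective hinj]
    · have h1 : φ (Polynomial.aeval (MvPolynomial.X j) q) ∈ Ie := Ideal.mem_map_of_mem φ hq
      rw [← hπ] at h1
      rw [← h1]
      rw [Polynomial.aeval_def, Polynomial.aeval_def, Polynomial.eval₂_map, Polynomial.hom_eval₂,
        ← AlgHom.coe_toRingHom, Polynomial.hom_eval₂]
      congr 1
      · ext a
        simp [φ]
      · simp [φ, y]
  have hsurj : Function.Surjective
      (MvPolynomial.aeval y : MvPolynomial (Fin m) K →ₐ[K] L) := by
    intro z
    obtain ⟨z, rfl⟩ := Ideal.Quotient.mkₐ_surjective K Ie z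
    exact ⟨z, hy z⟩
  obtain ⟨D, ν, v, hD, hν, hv⟩ := exists_monomial_basis y halg hsurj
  refine ⟨hIetop, D, ν, v, hD, hν, fun i => (hv i).trans (hy _), ?_⟩
  intro a
  rw [map_sum, map_sum]
  refine Finset.sum_congr rfl fun i _ => ?_
  rw [hv, hy, hsmul, map_mul, MvPolynomial.map_C, MvPolynomial.map_monomial, map_one]

/-- Primality of an ideal `I` of `k[σ][y₁, …, y_m]`. Hypotheses `H0` and `H1` say that the
variables `σ` form a maximal independent set modulo `I`, and `H2` that elements outside `I` of
degree at most `m * e` in `y`, with coefficients of degree at most `B`, are not zero divisors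
modulo `I`. Then `I` is contracted from `k(σ)[y]`, and the quotient `L` there is a field: otherwise
`exists_small_nonunit` would give a zero divisor to which `H2` applies. -/
theorem isPrime_of_nzd {k : Type*} [Field k] [Infinite k] {σ : Type} [Fintype σ]
    {m p d e E B : ℕ} (hE : 2 * (m * e) + 1 ≤ E)
    (F : Fin p → MvPolynomial (Fin m) (MvPolynomial σ k)) (hF : ∀ i, (F i).totalDegree ≤ E)
    (hFc : ∀ i γ, ((F i).coeff γ).totalDegree ≤ d)
    (H0 : ∀ a, MvPolynomial.C a ∈ Ideal.span (Set.range F) → a = 0)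
    (H1 : ∀ j, ∃ q : Polynomial (MvPolynomial σ k), q ≠ 0 ∧ q.natDegree ≤ e ∧
      Polynomial.aeval (MvPolynomial.X j : MvPolynomial (Fin m) (MvPolynomial σ k)) q ∈
        Ideal.span (Set.range F))
    (hB₁ : (E + 1) ^ m * (((3 * E) ^ 2 ^ m + E + 1) ^ m * d) ≤ B)
    (hB₂ : Fintype.card σ * e ^ m *
      (e ^ m * ((E + 1) ^ m * (((3 * E) ^ 2 ^ m + E + 1) ^ m * d))) ≤ B)
    (H2 : ∀ f : MvPolynomial (Fin m) (MvPolynomial σ k), f.totalDegree ≤ m * e →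
      (∀ γ, (f.coeff γ).totalDegree ≤ B) → f ∉ Ideal.span (Set.range F) →
      ∀ g, f * g ∈ Ideal.span (Set.range F) → g ∈ Ideal.span (Set.range F)) :
    (Ideal.span (Set.range F)).IsPrime := by
  classical
  set I := Ideal.span (Set.range F) with hI
  let K := FractionRing (MvPolynomial σ k)
  have hinj : Function.Injective (algebraMap (MvPolynomial σ k) K) := IsFractionRing.injective _ K
  let φ : MvPolynomial (Fin m) (MvPolynomial σ k) →+* MvPolynomial (Fin m) K :=
    MvPolynomial.map (algebraMap (MvPolynomial σ k) K)
  obtain ⟨hIetop, D, ν, v, hD, hν, hv, hcomb⟩ := exists_basis_quotient K I H0 H1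
  let Ie : Ideal (MvPolynomial (Fin m) K) := I.map φ
  have hIe : ∀ f, φ f ∈ Ie ↔ ∃ c : MvPolynomial σ k, c ≠ 0 ∧ MvPolynomial.C c * f ∈ I :=
    map_mem_map_iff I
  let L := MvPolynomial (Fin m) K ⧸ Ie
  let π : MvPolynomial (Fin m) K →ₐ[K] L := Ideal.Quotient.mkₐ K Ie
  have hπ : ∀ z, π z = 0 ↔ z ∈ Ie := fun z => Ideal.Quotient.eq_zero_iff_mem
  have hsmul : ∀ (c : K) (z : MvPolynomial (Fin m) K), c • π z = π (MvPolynomial.C c * z) := by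
    intro c z
    rw [← MvPolynomial.smul_eq_C_mul, map_smul]
  have : Nontrivial L := Ideal.Quotient.nontrivial_iff.mpr hIetop
  replace hcomb : ∀ a : Fin D → MvPolynomial σ k,
      π (φ (∑ l, MvPolynomial.C (a l) * MvPolynomial.monomial (ν l) 1)) =
        ∑ l, algebraMap _ K (a l) • v l := hcomb
  replace hv : ∀ i, v i = π (MvPolynomial.monomial (ν i) (1 : K)) := hv
  have hνE : ∀ i, (ν i).degree ≤ E := fun i => (hν i).trans (by omega)
  have hmondeg : ∀ μ : Fin m →₀ ℕ, μ.degree ≤ E →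
      (MvPolynomial.monomial μ (1 : MvPolynomial σ k)).totalDegree ≤ E := fun μ hμ =>
    (MvPolynomial.totalDegree_monomial_le μ 1).trans hμ
  have hmonc : ∀ μ γ : Fin m →₀ ℕ,
      (MvPolynomial.coeff γ (MvPolynomial.monomial μ (1 : MvPolynomial σ k))).totalDegree ≤ d := by
    intro μ γ
    rw [MvPolynomial.coeff_monomial]
    split_ifs <;> simp
  have hfilt := isDegFilt_totalDegree σ k
  -- a common denominator `s`, of bounded degree, of the coordinates of all monomials of degree at
  -- most `E`; in particular of the structure constants of `L`
  obtain ⟨s, hs0, hsd, hs⟩ := exists_uniform_multiplier hfilt (E := E) I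
    (fun l => MvPolynomial.monomial (ν l) 1)
    (H := ((3 * E) ^ 2 ^ m + E + 1) ^ m * d) (by
      intro μ hμ
      obtain ⟨g, b, hg0, hb⟩ := exists_common_denom (A := MvPolynomial σ k)
        (fun l => v.repr (π (MvPolynomial.monomial μ 1)) l)
      have h1 : φ (MvPolynomial.C g * MvPolynomial.monomial μ 1 -
          ∑ l, MvPolynomial.C (b l) * MvPolynomial.monomial (ν l) 1) ∈ Ie := by
        rw [← hπ, map_sub, map_sub, hcomb]
        simp only [hb, mul_smul]
        rw [← Finset.smul_sum, v.sum_repr, hsmul, ← map_sub]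
        simp [φ]
      obtain ⟨c, hc0, hc⟩ := (hIe _).mp h1
      refine exists_bounded_relation hfilt (by omega : 1 ≤ E) F hF hFc
        (MvPolynomial.monomial μ 1) (hmondeg μ hμ) (hmonc μ)
        (fun l => MvPolynomial.monomial (ν l) 1) (fun i => hmondeg _ (hνE i)) (fun i => hmonc _)
        (c * g) (mul_ne_zero hc0 hg0) (fun l => c * b l) ?_
      convert hc using 1
      rw [mul_sub, Finset.mul_sum]
      simp only [MvPolynomial.C_mul, mul_assoc])
  set S := (E + 1) ^ m * (((3 * E) ^ 2 ^ m + E + 1) ^ m * d) with hS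
  -- `I` is contracted from `Ie`: a power of `s` brings `f` into the span of the basis monomials, and
  -- `s` is not a zero divisor modulo `I`
  have hsat : ∀ f, φ f ∈ Ie → f ∈ I := by
    intro f hf
    obtain ⟨N, a, ha⟩ := exists_pow_mul_eq I ν (fun i => (Nat.succ_le_succ (hν i)).trans (by omega))
      s (fun μ hμ => (hs μ hμ).imp fun a ha => ha.2) f
    have h1 : π (φ (∑ l, MvPolynomial.C (a l) * MvPolynomial.monomial (ν l) 1)) = 0 := by
      have h2 := (hπ _).mpr (Ideal.mem_map_of_mem φ ha)
      rw [map_sub, map_sub, sub_eq_zero, map_mul, map_mul, (hπ _).mpr hf, mul_zero] at h2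
      exact h2.symm
    rw [hcomb] at h1
    have ha0 : ∀ l, a l = 0 := by
      intro l
      have := Fintype.linearIndependent_iff.mp v.linearIndependent _ h1 l
      exact hinj (by rw [this, map_zero])
    have h3 : MvPolynomial.C s ^ N * f ∈ I := by simpa [ha0] using ha
    clear ha
    induction N with
    | zero => simpa using h3
    | succ N ih =>
      refine ih ?_
      rw [pow_succ', mul_assoc] at h3
      refine H2 (MvPolynomial.C s) (by simp) (fun γ => ?_) (fun h => hs0 (H0 _ h)) _ h3
      rw [MvPolynomial.coeff_C]
      split_ifs
      · exact hsd.trans hB₁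
      · simp
  have hcomap : I = Ie.comap φ :=
    le_antisymm Ideal.le_comap_map fun f hf => hsat f hf
  by_cases hfield : IsField L
  · have hmax : Ie.IsMaximal := Ideal.Quotient.maximal_of_isField _ hfield
    rw [hcomap]
    exact Ideal.comap_isPrime φ Ie
  exfalso
  have hstruct : ∀ i j, ∃ a : Fin D → MvPolynomial σ k, (∀ l, (a l).totalDegree ≤ S) ∧
      algebraMap (MvPolynomial σ k) K s • (v i * v j) =
        ∑ l, algebraMap (MvPolynomial σ k) K (a l) • v l := by
    intro i j
    obtain ⟨a, had, ha⟩ := hs (ν i + ν j) (by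
      rw [map_add]; have := hν i; have := hν j; omega)
    refine ⟨a, had, ?_⟩
    have h2 := (hπ _).mpr (Ideal.mem_map_of_mem φ ha)
    rw [map_sub, map_sub, hcomb, sub_eq_zero] at h2
    rw [← h2, hv, hv, ← map_mul, MvPolynomial.monomial_mul, hsmul]
    simp [φ]
  choose a had ha using hstruct
  obtain ⟨α, hα0, hαd, hα⟩ := exists_small_nonunit v s hs0 a ha had hfield
  set f := ∑ l, MvPolynomial.C (α l) * MvPolynomial.monomial (ν l) (1 : MvPolynomial σ k) with hf
  have : Module.Finite K L := Module.Finite.of_basis v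
  -- in the finite-dimensional algebra `L`, a nonunit is a zero divisor
  obtain ⟨x, hx0, hx⟩ : ∃ x : L, x ≠ 0 ∧
      (∑ l, algebraMap (MvPolynomial σ k) K (α l) • v l) * x = 0 := by
    by_contra! hcon
    have hinj' : Function.Injective
        (LinearMap.mulLeft K (∑ l, algebraMap (MvPolynomial σ k) K (α l) • v l)) := by
      rw [← LinearMap.ker_eq_bot, LinearMap.ker_eq_bot']
      intro x hx
      by_contra hx0
      exact hcon x hx0 hx
    obtain ⟨x, hx⟩ := LinearMap.injective_iff_surjective.mp hinj' 1
    exact hα (IsUnit.of_mul_eq_one x hx)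
  obtain ⟨z, rfl⟩ := Ideal.Quotient.mkₐ_surjective K Ie x
  obtain ⟨c, g, hc0, hg⟩ := exists_C_mul_eq_map (A := MvPolynomial σ k) z
  have hcK : algebraMap (MvPolynomial σ k) K c ≠ 0 := fun h => hc0 (hinj (by rw [h, map_zero]))
  have hgx : π (φ g) = algebraMap (MvPolynomial σ k) K c • π z := by
    rw [hsmul, hg]
  have hgI : g ∉ I := by
    intro h
    have h1 := (hπ _).mpr (Ideal.mem_map_of_mem φ h)
    rw [hgx, smul_eq_zero] at h1
    rcases h1 with h1 | h1
    · exact hcK h1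
    · exact hx0 h1
  have hfg : f * g ∈ I := by
    refine hsat _ ((hπ _).mp ?_)
    rw [map_mul, map_mul, hcomb, hgx, mul_smul_comm]
    rw [show (∑ l, algebraMap (MvPolynomial σ k) K (α l) • v l) * π z = 0 from hx, smul_zero]
  have hfI : f ∉ I := by
    intro h
    have h1 := (hπ _).mpr (Ideal.mem_map_of_mem φ h)
    rw [hcomb] at h1
    refine hα0 (funext fun l => ?_)
    have := Fintype.linearIndependent_iff.mp v.linearIndependent _ h1 l
    exact hinj (by rw [this, Pi.zero_apply, map_zero])
  refine hgI (H2 f ?_ ?_ hfI g hfg)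
  · refine MvPolynomial.totalDegree_finsetSum_le fun i _ => ?_
    rw [MvPolynomial.C_mul_monomial]
    exact (MvPolynomial.totalDegree_monomial_le _ _).trans (hν i)
  · intro γ
    rw [hf, MvPolynomial.coeff_sum]
    refine MvPolynomial.totalDegree_finsetSum_le fun i _ => ?_
    rw [MvPolynomial.C_mul_monomial, MvPolynomial.coeff_monomial]
    split_ifs
    · rw [mul_one]
      refine (hαd i).trans (le_trans ?_ hB₂)
      gcongr
    · simp

end PrimeBound

/-! ### Splitting the variables -/

namespace PrimeBound

/-- Degree bounds for the image of a polynomial, for any degree filtration on the target. -/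
lemma IsDegFilt.aeval {k R ι : Type*} [CommRing k] [CommRing R] [Algebra k R] {dl : ℕ → R → Prop}
    (h : IsDegFilt dl) (hk : ∀ c : k, dl 0 (algebraMap k R c)) (f : ι → R) (hf : ∀ i, dl 1 (f i))
    (p : MvPolynomial ι k) : dl p.totalDegree (MvPolynomial.aeval f p) := by
  classical
  rw [MvPolynomial.aeval_def, MvPolynomial.eval₂_eq]
  refine h.sum _ _ fun γ hγ => ?_
  have hpow : ∀ (t : ℕ) (i : ι), dl t (f i ^ t) := by
    intro t i
    simpa using h.prod (Finset.range t) (fun _ => f i) fun _ _ => hf i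
  have hprod : ∀ s : Finset ι, dl (∑ i ∈ s, γ i) (∏ i ∈ s, f i ^ γ i) := by
    intro s
    induction s using Finset.induction_on with
    | empty => simpa using h.one
    | insert i s hi ih =>
      rw [Finset.sum_insert hi, Finset.prod_insert hi]
      exact h.mul (hpow _ _) ih
  refine h.mono (MvPolynomial.le_totalDegree hγ) ?_
  have := h.mul (hk (p.coeff γ)) (hprod γ.support)
  rwa [zero_add] at this

lemma isDegFilt_natDegree (A : Type*) [CommRing A] :
    IsDegFilt fun t (q : Polynomial A) => q.natDegree ≤ t where
  mono := fun hab h => h.trans hab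
  zero := by simp
  one := by simp
  add := fun hx hy => Polynomial.natDegree_add_le_of_degree_le hx hy
  neg := fun hx => by rwa [Polynomial.natDegree_neg]
  mul := fun hx hy => Polynomial.natDegree_mul_le_of_le hx hy

/-- Splitting the variables into those in `U`, regarded as coefficients, and the others. -/
lemma exists_split (k : Type*) [CommRing k] {n : ℕ} (U : Finset (Fin n)) :
    ∃ (m : ℕ) (Θ : MvPolynomial (Fin n) k ≃ₐ[k] MvPolynomial (Fin m) (MvPolynomial U k)),
      m ≤ n ∧ (∀ i (hi : i ∈ U), Θ (MvPolynomial.X i) = MvPolynomial.C (MvPolynomial.X ⟨i, hi⟩)) ∧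
      (∀ i, i ∉ U → ∃ j, Θ (MvPolynomial.X i) = MvPolynomial.X j) ∧
      ∀ j, ∃ i, i ∉ U ∧ Θ (MvPolynomial.X i) = MvPolynomial.X j := by
  classical
  let α := Fintype.equivFin {i // ¬ i ∈ U}
  let ε : Fin n ≃ Fin (Fintype.card {i // ¬ i ∈ U}) ⊕ U :=
    (Equiv.sumCompl (· ∈ U)).symm.trans ((Equiv.sumComm _ _).trans (Equiv.sumCongr α (Equiv.refl _)))
  have hε1 : ∀ i (hi : i ∈ U), ε i = Sum.inr ⟨i, hi⟩ := by
    intro i hi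
    simp [ε, Equiv.sumCompl_symm_apply_of_pos (p := (· ∈ U)) hi]
  have hε2 : ∀ i (hi : i ∉ U), ε i = Sum.inl (α ⟨i, hi⟩) := by
    intro i hi
    simp [ε, Equiv.sumCompl_symm_apply_of_neg (p := (· ∈ U)) hi]
  refine ⟨_, (MvPolynomial.renameEquiv k ε).trans (MvPolynomial.sumAlgEquiv k _ _), ?_, ?_, ?_, ?_⟩
  · exact (Fintype.card_subtype_le _).trans (by simp)
  · intro i hi
    simp [hε1 i hi]
  · intro i hi
    exact ⟨α ⟨i, hi⟩, by simp [hε2 i hi]⟩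
  · intro j
    refine ⟨(α.symm j).1, (α.symm j).2, ?_⟩
    simp [hε2 _ (α.symm j).2]

section Split

variable {k : Type*} [Field k] {n m : ℕ} {U : Finset (Fin n)}
  (Θ : MvPolynomial (Fin n) k ≃ₐ[k] MvPolynomial (Fin m) (MvPolynomial U k))

lemma split_eq_aeval (p : MvPolynomial (Fin n) k) :
    Θ p = MvPolynomial.aeval (fun i => Θ (MvPolynomial.X i)) p := by
  have : (Θ : MvPolynomial (Fin n) k →ₐ[k] _) =
      MvPolynomial.aeval (fun i => Θ (MvPolynomial.X i)) := by
    ext i : 1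
    simp
  exact DFunLike.congr_fun this p

lemma totalDegree_split_le
    (h1 : ∀ i (hi : i ∈ U), Θ (MvPolynomial.X i) = MvPolynomial.C (MvPolynomial.X ⟨i, hi⟩))
    (h2 : ∀ i, i ∉ U → ∃ j, Θ (MvPolynomial.X i) = MvPolynomial.X j)
    (p : MvPolynomial (Fin n) k) : (Θ p).totalDegree ≤ p.totalDegree := by
  rw [split_eq_aeval Θ p]
  refine (isDegFilt_totalDegree (Fin m) (MvPolynomial U k)).aeval (fun c => ?_) _ (fun i => ?_) p
  · rw [IsScalarTower.algebraMap_apply k (MvPolynomial U k), MvPolynomial.algebraMap_eq]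
    simp
  · by_cases hi : i ∈ U
    · simp [h1 i hi]
    · obtain ⟨j, hj⟩ := h2 i hi
      simp [hj]

lemma totalDegree_coeff_split_le
    (h1 : ∀ i (hi : i ∈ U), Θ (MvPolynomial.X i) = MvPolynomial.C (MvPolynomial.X ⟨i, hi⟩))
    (h2 : ∀ i, i ∉ U → ∃ j, Θ (MvPolynomial.X i) = MvPolynomial.X j)
    (p : MvPolynomial (Fin n) k) (γ : Fin m →₀ ℕ) :
    ((Θ p).coeff γ).totalDegree ≤ p.totalDegree := by
  classical
  revert γ
  rw [split_eq_aeval Θ p]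
  refine (isDegFilt_coeff (isDegFilt_totalDegree U k) (Fin m)).aeval (fun c γ => ?_) _
    (fun i γ => ?_) p
  · rw [IsScalarTower.algebraMap_apply k (MvPolynomial U k), MvPolynomial.algebraMap_eq,
      MvPolynomial.coeff_C]
    split_ifs <;> simp [MvPolynomial.algebraMap_eq]
  · by_cases hi : i ∈ U
    · rw [h1 i hi, MvPolynomial.coeff_C]
      split_ifs <;> simp
    · obtain ⟨j, hj⟩ := h2 i hi
      rw [hj, MvPolynomial.coeff_X]
      split_ifs <;> simp

lemma split_rename
    (h1 : ∀ i (hi : i ∈ U), Θ (MvPolynomial.X i) = MvPolynomial.C (MvPolynomial.X ⟨i, hi⟩))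
    (a : MvPolynomial U k) :
    Θ (MvPolynomial.rename Subtype.val a) = MvPolynomial.C a := by
  have : (Θ : MvPolynomial (Fin n) k →ₐ[k] _).comp
      (MvPolynomial.rename (Subtype.val : U → Fin n)) =
        IsScalarTower.toAlgHom k (MvPolynomial U k) (MvPolynomial (Fin m) (MvPolynomial U k)) := by
    ext i : 1
    simp [h1, MvPolynomial.algebraMap_eq]
  exact DFunLike.congr_fun this a

lemma totalDegree_symm_split_le
    (h1 : ∀ i (hi : i ∈ U), Θ (MvPolynomial.X i) = MvPolynomial.C (MvPolynomial.X ⟨i, hi⟩))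
    (h3 : ∀ j, ∃ i, i ∉ U ∧ Θ (MvPolynomial.X i) = MvPolynomial.X j)
    {a b : ℕ} (P : MvPolynomial (Fin m) (MvPolynomial U k))
    (ha : P.totalDegree ≤ a) (hb : ∀ γ, (P.coeff γ).totalDegree ≤ b) :
    (Θ.symm P).totalDegree ≤ b + a := by
  choose i hi hiX using h3
  have hX : ∀ j, Θ.symm (MvPolynomial.X j) = MvPolynomial.X (i j) := fun j => by
    rw [← hiX j, AlgEquiv.symm_apply_apply]
  have hC : ∀ q : MvPolynomial U k, Θ.symm (MvPolynomial.C q) =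
      MvPolynomial.rename Subtype.val q := fun q => by
    rw [← split_rename Θ h1, AlgEquiv.symm_apply_apply]
  conv_lhs => rw [P.as_sum, map_sum]
  refine MvPolynomial.totalDegree_finsetSum_le fun γ hγ => ?_
  rw [MvPolynomial.monomial_eq, map_mul, hC]
  refine (MvPolynomial.totalDegree_mul _ _).trans (add_le_add ?_ ?_)
  · exact (MvPolynomial.totalDegree_rename_le _ _).trans (hb γ)
  · rw [Finsupp.prod, map_prod]
    refine (MvPolynomial.totalDegree_finsetProd _ _).trans ?_
    refine le_trans ?_ ((MvPolynomial.le_totalDegree hγ).trans ha)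
    refine Finset.sum_le_sum fun j _ => ?_
    rw [map_pow, hX]
    refine (MvPolynomial.totalDegree_pow _ _).trans ?_
    simp

end Split

end PrimeBound

/-! ### Algebraic independence modulo an ideal -/

namespace PrimeBound

/-- The variables in `U` are algebraically independent modulo `I`. -/
def IndepMod {k : Type*} [CommRing k] {n : ℕ} (I : Ideal (MvPolynomial (Fin n) k))
    (U : Finset (Fin n)) : Prop :=
  ∀ q : MvPolynomial U k, MvPolynomial.rename Subtype.val q ∈ I → q = 0

lemma map_mem_span_range_iff {R R' : Type*} [CommRing R] [CommRing R'] (Θ : R ≃+* R') {p : ℕ}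
    (f : Fin p → R) (z : R) :
    Θ z ∈ Ideal.span (Set.range fun i => Θ (f i)) ↔ z ∈ Ideal.span (Set.range f) := by
  have : Ideal.span (Set.range fun i => Θ (f i)) = (Ideal.span (Set.range f)).map Θ := by
    rw [Ideal.map_span, ← Set.range_comp]
    rfl
  rw [this]
  constructor
  · intro h
    rw [← Ideal.comap_symm, Ideal.mem_comap] at h
    simpa using h
  · exact Ideal.mem_map_of_mem _

/-- Dependent variables satisfy a nontrivial relation of explicitly bounded degree. -/
lemma exists_bounded_dependence {k : Type*} [Field k] [Infinite k] {n d p : ℕ} (hd : 1 ≤ d)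
    (f : Fin p → MvPolynomial (Fin n) k) (hf : ∀ i, (f i).totalDegree ≤ d) (V : Finset (Fin n))
    (hV : ¬ IndepMod (Ideal.span (Set.range f)) V) :
    ∃ q : MvPolynomial V k, q ≠ 0 ∧ q.totalDegree ≤ ((3 * d) ^ 2 ^ n + d + 1) ^ n * d ∧
      MvPolynomial.rename Subtype.val q ∈ Ideal.span (Set.range f) := by
  obtain ⟨m, Θ, hm, h1, h2, h3⟩ := exists_split k V
  unfold IndepMod at hV
  push Not at hV
  obtain ⟨c, hc, hc0⟩ := hV
  have hiff := map_mem_span_range_iff Θ.toRingEquiv f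
  have hrel : MvPolynomial.C c * 1 - ∑ j : Fin 0, MvPolynomial.C ((fun _ => 0 : Fin 0 → _) j) *
      (fun _ => 0 : Fin 0 → MvPolynomial (Fin m) (MvPolynomial V k)) j ∈
      Ideal.span (Set.range fun i => Θ (f i)) := by
    have := (hiff _).2 hc
    simpa [split_rename Θ h1] using this
  obtain ⟨c', b', hc', hdl, -, hmem⟩ := exists_bounded_relation (isDegFilt_totalDegree V k) hd
    (fun i => Θ (f i)) (fun i => (totalDegree_split_le Θ h1 h2 _).trans (hf i))
    (fun i γ => (totalDegree_coeff_split_le Θ h1 h2 _ γ).trans (hf i)) 1 (by simp)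
    (fun γ => by
      classical
      rw [MvPolynomial.coeff_one]
      split_ifs <;> simp) (fun _ => 0) (fun j => j.elim0) (fun j => j.elim0) c hc0
    (fun _ => 0) hrel
  refine ⟨c', hc', hdl.trans ?_, ?_⟩
  · have h3d : (3 * d) ^ 2 ^ m ≤ (3 * d) ^ 2 ^ n :=
      Nat.pow_le_pow_right (by omega) (Nat.pow_le_pow_right (by omega) hm)
    refine Nat.mul_le_mul_right _ ?_
    calc ((3 * d) ^ 2 ^ m + d + 1) ^ m ≤ ((3 * d) ^ 2 ^ n + d + 1) ^ m :=
          Nat.pow_le_pow_left (by omega) _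
      _ ≤ _ := Nat.pow_le_pow_right (by omega) hm
  · refine (hiff _).1 ?_
    simpa [split_rename Θ h1] using hmem

/-- The relation of `exists_bounded_dependence` as a polynomial in the single variable `j`. -/
lemma exists_univariate {k : Type*} [Field k] {n : ℕ} (U : Finset (Fin n)) (j : Fin n)
    (q : MvPolynomial (insert j U : Finset (Fin n)) k) (hq : q ≠ 0) :
    ∃ Q : Polynomial (MvPolynomial U k), Q ≠ 0 ∧ Q.natDegree ≤ q.totalDegree ∧
      Polynomial.eval₂ (MvPolynomial.rename (Subtype.val : U → Fin n) :
        MvPolynomial U k →ₐ[k] _).toRingHom (MvPolynomial.X j) Q =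
        MvPolynomial.rename Subtype.val q := by
  classical
  let g : ↥(insert j U : Finset (Fin n)) → Polynomial (MvPolynomial U k) := fun i =>
    if h : i.1 ∈ U then Polynomial.C (MvPolynomial.X ⟨i.1, h⟩) else Polynomial.X
  let e : Polynomial (MvPolynomial U k) →+* MvPolynomial (Fin n) k :=
    Polynomial.eval₂RingHom (MvPolynomial.rename (Subtype.val : U → Fin n) :
        MvPolynomial U k →ₐ[k] _).toRingHom (MvPolynomial.X j)
  have he : e (MvPolynomial.aeval g q) = MvPolynomial.rename Subtype.val q := by
    have : e.comp (MvPolynomial.aeval g).toRingHom =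
        (MvPolynomial.rename (Subtype.val : ↥(insert j U : Finset (Fin n)) → Fin n) :
          MvPolynomial _ k →ₐ[k] _).toRingHom := by
      refine MvPolynomial.ringHom_ext (fun c => ?_) (fun i => ?_)
      · simp [e, MvPolynomial.algebraMap_eq, IsScalarTower.algebraMap_apply k (MvPolynomial U k)
          (Polynomial (MvPolynomial U k))]
      · by_cases hi : i.1 ∈ U
        · simp [e, g, hi]
        · have hij : i.1 = j := (Finset.mem_insert.1 i.2).resolve_right hi
          have hjU : j ∉ U := hij ▸ hi
          simp [e, g, hij, hjU]
    exact DFunLike.congr_fun this q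
  refine ⟨MvPolynomial.aeval g q, ?_, ?_, he⟩
  · intro h0
    rw [h0, map_zero] at he
    exact hq (MvPolynomial.rename_injective _ Subtype.val_injective (he.symm.trans (map_zero _).symm))
  · refine (isDegFilt_natDegree (MvPolynomial U k)).aeval (fun c => ?_) _ (fun i => ?_) q
    · simp [IsScalarTower.algebraMap_apply k (MvPolynomial U k) (Polynomial (MvPolynomial U k))]
    · dsimp only [g]
      split_ifs <;> simp

end PrimeBound

namespace PrimeBound

/-- The theorem over an infinite field, with an explicit chain of bounds: `e` for the degree of the
algebraic relations between dependent variables, `E` for the degree of the monomials to be expressed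
in the basis, `S` for the degree of the structure constants and of their denominator, `B` for the
degree of the coefficients of a nonunit, `B'` for the resulting total degree, and `M` for the
degrees of the cofactors provided by Hermann's theorem. -/
lemma isPrime_of_infinite {k : Type*} [Field k] [Infinite k] {n d p e E S B B' M : ℕ} (hd : 1 ≤ d)
    (he : e = ((3 * d) ^ 2 ^ n + d + 1) ^ n * d) (hE : E = 2 * (n * e) + d + 1)
    (hS : S = (E + 1) ^ n * (((3 * E) ^ 2 ^ n + E + 1) ^ n * d))
    (hB : B = n * e ^ n * (e ^ n * S) + S) (hB' : B' = B + n * e) (hM : (3 * B') ^ 2 ^ n ≤ M)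
    (f : Fin p → MvPolynomial (Fin n) k) (hf : ∀ i, (f i).totalDegree ≤ d)
    (hI : Ideal.span (Set.range f) ≠ ⊤)
    (hprime : ∀ u v : MvPolynomial (Fin n) k, u.totalDegree ≤ M → v.totalDegree ≤ M →
      u * v ∈ Ideal.span (Set.range f) →
        u ∈ Ideal.span (Set.range f) ∨ v ∈ Ideal.span (Set.range f)) :
    (Ideal.span (Set.range f)).IsPrime := by
  classical
  set I := Ideal.span (Set.range f) with hIdef
  have he1 : 1 ≤ e := by
    rw [he]
    exact Nat.one_le_iff_ne_zero.2 (Nat.mul_ne_zero (pow_ne_zero _ (by omega)) (by omega))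
  have hne : (Finset.univ.filter fun U : Finset (Fin n) => IndepMod I U).Nonempty := by
    refine ⟨∅, Finset.mem_filter.2 ⟨Finset.mem_univ _, fun q hq => ?_⟩⟩
    rw [MvPolynomial.eq_C_of_isEmpty q] at hq ⊢
    by_contra hc
    refine hI (Ideal.eq_top_of_isUnit_mem _ hq ?_)
    rw [MvPolynomial.rename_C]
    refine IsUnit.map _ (isUnit_iff_ne_zero.2 fun h0 => hc ?_)
    rw [h0, map_zero]
  -- an independent set of variables of maximal size; the empty set is independent as `I` is proper
  obtain ⟨U, hU, hmax⟩ := Finset.exists_max_image _ Finset.card hne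
  have hUI : IndepMod I U := (Finset.mem_filter.1 hU).2
  have hdep : ∀ j, j ∉ U → ¬ IndepMod I (insert j U) := by
    intro j hj hind
    have := hmax (insert j U) (Finset.mem_filter.2 ⟨Finset.mem_univ _, hind⟩)
    rw [Finset.card_insert_of_notMem hj] at this
    omega
  obtain ⟨m, Θ, hm, h1, h2, h3⟩ := exists_split k U
  have hiff : ∀ z, Θ z ∈ Ideal.span (Set.range fun i => Θ (f i)) ↔ z ∈ I :=
    map_mem_span_range_iff Θ.toRingEquiv f
  have hiff' : ∀ z, z ∈ Ideal.span (Set.range fun i => Θ (f i)) ↔ Θ.symm z ∈ I := by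
    intro z
    rw [← hiff, AlgEquiv.apply_symm_apply]
  have hEpos : 1 ≤ E := by omega
  have hS' : (E + 1) ^ m * (((3 * E) ^ 2 ^ m + E + 1) ^ m * d) ≤ S := by
    rw [hS]
    have h3d : (3 * E) ^ 2 ^ m ≤ (3 * E) ^ 2 ^ n :=
      Nat.pow_le_pow_right (by omega) (Nat.pow_le_pow_right (by omega) hm)
    refine Nat.mul_le_mul (Nat.pow_le_pow_right (by omega) hm) (Nat.mul_le_mul_right _ ?_)
    calc ((3 * E) ^ 2 ^ m + E + 1) ^ m ≤ ((3 * E) ^ 2 ^ n + E + 1) ^ m :=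
          Nat.pow_le_pow_left (by omega) _
      _ ≤ _ := Nat.pow_le_pow_right (by omega) hm
  have hme : m * e ≤ n * e := Nat.mul_le_mul_right _ hm
  have hdS : d ≤ S := by
    rw [hS]
    have : 1 ≤ (E + 1) ^ n * ((3 * E) ^ 2 ^ n + E + 1) ^ n := Nat.one_le_iff_ne_zero.2
      (Nat.mul_ne_zero (pow_ne_zero _ (by omega)) (pow_ne_zero _ (by omega)))
    rw [← mul_assoc]
    exact Nat.le_mul_of_pos_left d this
  have hSB : S ≤ B := by omega
  have hprimeJ : (Ideal.span (Set.range fun i => Θ (f i))).IsPrime := by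
    refine isPrime_of_nzd (d := d) (e := e) (E := E) (B := B) ?_ (fun i => Θ (f i))
      ?_ ?_ ?_ ?_ ?_ ?_ ?_
    · omega
    · exact fun i => (totalDegree_split_le Θ h1 h2 _).trans ((hf i).trans (by omega))
    · exact fun i γ => (totalDegree_coeff_split_le Θ h1 h2 _ γ).trans (hf i)
    · intro a ha
      rw [← split_rename Θ h1, hiff] at ha
      exact hUI a ha
    · intro j
      obtain ⟨i, hi, hij⟩ := h3 j
      obtain ⟨q, hq0, hqd, hqI⟩ := exists_bounded_dependence hd f hf _ (hdep i hi)
      obtain ⟨Q, hQ0, hQd, hQ⟩ := exists_univariate U i q hq0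
      refine ⟨Q, hQ0, hQd.trans (hqd.trans he.ge), ?_⟩
      have hΘ : Polynomial.aeval (MvPolynomial.X j) Q =
          Θ (MvPolynomial.rename Subtype.val q) := by
        have h := Polynomial.hom_eval₂ Q (MvPolynomial.rename (Subtype.val : U → Fin n) :
          MvPolynomial U k →ₐ[k] _).toRingHom Θ.toRingEquiv.toRingHom (MvPolynomial.X i)
        rw [hQ] at h
        refine Eq.trans ?_ h.symm
        rw [Polynomial.aeval_def]
        congr 1
        · refine RingHom.ext fun a => ?_
          exact (split_rename Θ h1 a).symm
        · exact hij.symm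
      rw [hΘ, hiff]
      exact hqI
    · exact hS'.trans hSB
    · have hcard : Fintype.card U ≤ n := by simpa using Finset.card_le_univ U
      have hem : e ^ m ≤ e ^ n := Nat.pow_le_pow_right he1 hm
      rw [hB]
      refine le_trans ?_ (Nat.le_add_right _ _)
      exact Nat.mul_le_mul (Nat.mul_le_mul hcard hem) (Nat.mul_le_mul hem hS')
    · intro u hu huc huI g hug
      rw [hiff'] at huI hug ⊢
      rw [map_mul] at hug
      refine nzd_of_prime_up_to hd f hf (B' := B') (by omega) hM hprime (Θ.symm u) ?_ huI _ hug
      refine (totalDegree_symm_split_le Θ h1 h3 u hu huc).trans (by omega)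
  have : I = (Ideal.span (Set.range fun i => Θ (f i))).comap Θ := by
    ext z
    rw [Ideal.mem_comap, hiff]
  rw [this]
  exact hprimeJ.comap _

end PrimeBound

/-! ### Numerical bounds -/

namespace PrimeBound

set_option maxHeartbeats 1000000 in
/-- The chain of bounds of `isPrime_of_infinite` stays below the second term of the maximum. With
`X = 2nd` and `N = n * 2 ^ n`, the quantities `e`, `E`, `S`, `B'` are at most `X` to the powers `3N`,
`4N`, `12N²`, `20N²`. -/
lemma bound_arith {n d e E S B B' : ℕ} (hn : 1 ≤ n) (hd : 1 ≤ d)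
    (he : e = ((3 * d) ^ 2 ^ n + d + 1) ^ n * d) (hE : E = 2 * (n * e) + d + 1)
    (hS : S = (E + 1) ^ n * (((3 * E) ^ 2 ^ n + E + 1) ^ n * d))
    (hB : B = n * e ^ n * (e ^ n * S) + S) (hB' : B' = B + n * e) :
    (3 * B') ^ 2 ^ n ≤ (2 * n * d) ^ (n * (n + 1) ^ 2 * 2 ^ (4 * n + 6)) := by
  obtain ⟨q, hq⟩ : ∃ q, q = 2 ^ n := ⟨_, rfl⟩
  obtain ⟨X, hX⟩ : ∃ X, X = 2 * n * d := ⟨_, rfl⟩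
  obtain ⟨N, hN⟩ : ∃ N, N = n * q := ⟨_, rfl⟩
  rw [show 2 ^ (4 * n + 6) = 64 * q ^ 4 by rw [hq, pow_add, ← pow_mul, mul_comm n 4]; ring]
  rw [← hq] at he hS ⊢
  rw [← hX]
  have hq2 : 2 ≤ q := by
    rw [hq]
    calc 2 = 2 ^ 1 := rfl
      _ ≤ 2 ^ n := Nat.pow_le_pow_right (by norm_num) hn
  have hnN : 2 * n ≤ N := by rw [hN]; nlinarith
  have hqN : q ≤ N := by rw [hN]; nlinarith
  have hN2 : 2 ≤ N := by omega
  have hXn : 2 * n ≤ X := by rw [hX]; nlinarith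
  have hXd : 2 * d ≤ X := by rw [hX]; nlinarith
  have hX2 : 2 ≤ X := by omega
  have pw : ∀ {a b : ℕ}, a ≤ b → X ^ a ≤ X ^ b := fun h => Nat.pow_le_pow_right (by omega) h
  -- multiplication by a constant `c ≤ X ^ r` raises the exponent by `r`
  have mulX : ∀ {c z r a b : ℕ}, c ≤ X ^ r → z ≤ X ^ a → r + a ≤ b → c * z ≤ X ^ b :=
    fun hc hz h => (Nat.mul_le_mul hc hz).trans ((pow_add X _ _).ge.trans (pw h))
  have powX : ∀ {z a r b : ℕ}, z ≤ X ^ a → a * r ≤ b → z ^ r ≤ X ^ b := fun hz h =>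
    (Nat.pow_le_pow_left hz _).trans ((pow_mul X _ _).ge.trans (pw h))
  have h2X : 2 ≤ X ^ 1 := by simpa using hX2
  have h3X : 3 ≤ X ^ 2 := by nlinarith
  have hdX : d ≤ X ^ 1 := by rw [pow_one]; omega
  have hnX : n ≤ X ^ 1 := by rw [pow_one]; omega
  have h2nX : 2 * n ≤ X ^ 1 := by rw [pow_one]; omega
  have hNN : N ≤ N ^ 2 := by nlinarith
  have hnN2 : n * N ≤ N ^ 2 := by nlinarith
  have h3d : 3 * d ≤ X ^ 2 := by
    rw [sq]
    exact (show 3 * d ≤ 2 * X by omega).trans (Nat.mul_le_mul_right _ hX2)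
  have he1 : 1 ≤ e := by
    rw [he]
    exact Nat.one_le_iff_ne_zero.2 (Nat.mul_ne_zero (pow_ne_zero _ (by omega)) (by omega))
  have ha : (3 * d) ^ q + d + 1 ≤ X ^ (2 * q + 1) := by
    have h1 : 3 * d ≤ (3 * d) ^ q := Nat.le_self_pow (by omega) _
    calc (3 * d) ^ q + d + 1 ≤ 2 * (3 * d) ^ q := by omega
      _ ≤ _ := mulX h2X (powX h3d le_rfl) (by omega)
  have heX : e ≤ X ^ (3 * N) := by
    rw [he, mul_comm]
    refine mulX hdX (powX ha le_rfl) ?_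
    have : (2 * q + 1) * n = 2 * N + n := by rw [hN]; ring
    omega
  have hEX : E ≤ X ^ (4 * N) := by
    have h3 : n * e ≤ n * d * e := Nat.mul_le_mul_right _ (Nat.le_mul_of_pos_right _ hd)
    have h4 : d ≤ n * d * e :=
      (Nat.le_mul_of_pos_left _ hn).trans (Nat.le_mul_of_pos_right _ he1)
    have h5 : E ≤ 2 * (X * e) := by
      have h6 : 2 * (X * e) = 4 * (n * d * e) := by rw [hX]; ring
      rw [hE, h6]
      omega
    exact h5.trans (mulX h2X (mulX (pow_one X).ge heX le_rfl) (by omega))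
  have hEpos : 1 ≤ E := by omega
  have hE1 : E + 1 ≤ X ^ (5 * N) :=
    (show E + 1 ≤ 2 * E by omega).trans (mulX h2X hEX (by omega))
  have h3E : 3 * E ≤ X ^ (5 * N) := mulX h3X hEX (by omega)
  have hb : (3 * E) ^ q + E + 1 ≤ X ^ (6 * N * q) := by
    have h1 : 3 * E ≤ (3 * E) ^ q := Nat.le_self_pow (by omega) _
    calc (3 * E) ^ q + E + 1 ≤ 2 * (3 * E) ^ q := by omega
      _ ≤ _ := mulX h2X (powX h3E le_rfl) (by
        have : 1 ≤ N * q := Nat.mul_pos (by omega) (by omega)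
        linarith)
  have hSX : S ≤ X ^ (12 * N ^ 2) := by
    rw [hS, mul_comm ((_ + E + 1) ^ n) d]
    refine mulX (powX hE1 le_rfl) (mulX hdX (powX hb le_rfl) le_rfl) ?_
    have : 6 * N * q * n = 6 * N ^ 2 := by rw [hN]; ring
    rw [this]
    linarith
  have henX : e ^ n ≤ X ^ (3 * N ^ 2) := powX heX (by linarith)
  have hBX : B ≤ X ^ (19 * N ^ 2) := by
    have h1 : 1 ≤ n * (e ^ n * e ^ n) :=
      Nat.mul_pos hn (Nat.mul_pos (pow_pos he1 _) (pow_pos he1 _))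
    have h2 : B ≤ 2 * n * (e ^ n * (e ^ n * S)) := by
      rw [hB]
      have := Nat.le_mul_of_pos_left S h1
      linarith
    exact h2.trans (mulX h2nX (mulX henX (mulX henX hSX le_rfl) le_rfl) (by linarith))
  have hBX' : B' ≤ X ^ (20 * N ^ 2) := by
    have h1 : n * e ≤ X ^ (19 * N ^ 2) := mulX hnX heX (by linarith)
    have h2 : B' ≤ 2 * X ^ (19 * N ^ 2) := by omega
    exact h2.trans (mulX h2X le_rfl (by linarith))
  have h3B : 3 * B' ≤ X ^ (22 * N ^ 2) := mulX h3X hBX' (by linarith)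
  refine powX h3B ?_
  have h1 : 22 * N ^ 2 * q = n * n * q ^ 3 * 22 := by rw [hN]; ring
  rw [h1]
  have h2 : n * n ≤ n * (n + 1) ^ 2 := Nat.mul_le_mul_left _
    ((Nat.le_succ n).trans (Nat.le_self_pow (by norm_num) _))
  have h3 : q ^ 3 ≤ q ^ 4 := Nat.pow_le_pow_right (by omega) (by norm_num)
  calc n * n * q ^ 3 * 22 ≤ n * (n + 1) ^ 2 * q ^ 4 * 64 := by gcongr; norm_num
    _ = _ := by ring

end PrimeBound

/-! ### Adjoining a transcendental to the field -/

namespace PrimeBound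

section Transcendental

variable {k : Type*} [Field k] {τ : Type*}

/-- The identification of `k[t][x]` with `k[x][t]`. -/
noncomputable def swapHom (k : Type*) [Field k] (τ : Type*) :
    MvPolynomial τ (Polynomial k) →+* Polynomial (MvPolynomial τ k) :=
  MvPolynomial.eval₂Hom (Polynomial.mapRingHom MvPolynomial.C)
    fun i => Polynomial.C (MvPolynomial.X i)

lemma swapHom_C (c : Polynomial k) :
    swapHom k τ (MvPolynomial.C c) = c.map MvPolynomial.C := by
  simp [swapHom]

lemma swapHom_map (g : MvPolynomial τ k) :
    swapHom k τ (MvPolynomial.map Polynomial.C g) = Polynomial.C g := by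
  have : (swapHom k τ).comp (MvPolynomial.map Polynomial.C) = Polynomial.C := by
    refine MvPolynomial.ringHom_ext (fun c => ?_) (fun i => ?_) <;> simp [swapHom]
  exact DFunLike.congr_fun this g

lemma totalDegree_coeff_swapHom_le (P : MvPolynomial τ (Polynomial k)) (t : ℕ) :
    ((swapHom k τ P).coeff t).totalDegree ≤ P.totalDegree := by
  classical
  conv_lhs => rw [P.as_sum, map_sum, Polynomial.finsetSum_coeff]
  refine MvPolynomial.totalDegree_finsetSum_le fun γ hγ => ?_
  have h : swapHom k τ (MvPolynomial.monomial γ (P.coeff γ)) =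
      (P.coeff γ).map MvPolynomial.C * Polynomial.C (MvPolynomial.monomial γ 1) := by
    have h1 : MvPolynomial.monomial γ (P.coeff γ) = MvPolynomial.C (P.coeff γ) *
        MvPolynomial.map Polynomial.C (MvPolynomial.monomial γ (1 : k)) := by
      rw [MvPolynomial.map_monomial, MvPolynomial.C_mul_monomial]
      simp
    rw [h1, map_mul, swapHom_C, swapHom_map]
  rw [h, Polynomial.coeff_mul_C, Polynomial.coeff_map, MvPolynomial.C_mul_monomial]
  refine (MvPolynomial.totalDegree_monomial_le _ _).trans ?_
  exact MvPolynomial.le_totalDegree hγ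

/-- The extension of `I` to `k[t][x]` consists of the polynomials all of whose coefficients with
respect to `t` lie in `I`. -/
lemma mem_map_map_C_iff (I : Ideal (MvPolynomial τ k)) (P : MvPolynomial τ (Polynomial k)) :
    P ∈ I.map (MvPolynomial.map Polynomial.C) ↔ ∀ t, (swapHom k τ P).coeff t ∈ I := by
  rw [← Ideal.mem_map_C_iff]
  constructor
  · intro h
    have h1 := Ideal.mem_map_of_mem (swapHom k τ) h
    rw [Ideal.map_map] at h1
    have : (swapHom k τ).comp (MvPolynomial.map Polynomial.C) = Polynomial.C :=
      RingHom.ext swapHom_map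
    rwa [this] at h1
  · intro h
    let ψ : Polynomial (MvPolynomial τ k) →+* MvPolynomial τ (Polynomial k) :=
      Polynomial.eval₂RingHom (MvPolynomial.map Polynomial.C) (MvPolynomial.C Polynomial.X)
    have h1 := Ideal.mem_map_of_mem ψ h
    rw [Ideal.map_map] at h1
    have h2 : ψ.comp Polynomial.C = MvPolynomial.map Polynomial.C := by
      ext <;> simp [ψ]
    have h3 : ψ.comp (swapHom k τ) = RingHom.id _ := by
      refine MvPolynomial.ringHom_ext' (Polynomial.ringHom_ext (fun c => ?_) ?_) (fun i => ?_) <;>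
        simp [ψ, swapHom]
    rw [h2] at h1
    have h4 := DFunLike.congr_fun h3 P
    rw [RingHom.comp_apply, RingHom.id_apply] at h4
    rwa [h4] at h1

/-- Adjoining a transcendental `t`: if a product of two polynomials over `k[t]`, multiplied by
`c ∈ k[t] \ {0}`, lies in `I[t]`, then primality of `I` up to `M` applies to the leading
coefficients (with respect to `t`) of the two factors modulo `I`. -/
lemma mem_or_mem_of_C_mul_mem (I : Ideal (MvPolynomial τ k)) {M : ℕ} (hI : I ≠ ⊤)
    (hprime : ∀ u v : MvPolynomial τ k, u.totalDegree ≤ M → v.totalDegree ≤ M →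
      u * v ∈ I → u ∈ I ∨ v ∈ I)
    (U V : MvPolynomial τ (Polynomial k)) (hU : U.totalDegree ≤ M) (hV : V.totalDegree ≤ M)
    (c : Polynomial k) (hc : c ≠ 0)
    (h : MvPolynomial.C c * (U * V) ∈ I.map (MvPolynomial.map Polynomial.C)) :
    U ∈ I.map (MvPolynomial.map Polynomial.C) ∨ V ∈ I.map (MvPolynomial.map Polynomial.C) := by
  have : Nontrivial (MvPolynomial τ k ⧸ I) := Ideal.Quotient.nontrivial_iff.2 hI
  let π : MvPolynomial τ (Polynomial k) →+* Polynomial (MvPolynomial τ k ⧸ I) :=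
    (Polynomial.mapRingHom (Ideal.Quotient.mk I)).comp (swapHom k τ)
  have hπ : ∀ P, P ∈ I.map (MvPolynomial.map Polynomial.C) ↔ π P = 0 := by
    intro P
    rw [mem_map_map_C_iff]
    simp only [π, RingHom.comp_apply, Polynomial.coe_mapRingHom, Polynomial.ext_iff,
      Polynomial.coeff_map, Polynomial.coeff_zero, Ideal.Quotient.eq_zero_iff_mem]
  rw [hπ] at h ⊢
  rw [hπ V]
  by_contra hne
  push Not at hne
  have hlead : (π U).leadingCoeff * (π V).leadingCoeff ≠ 0 := by
    have hU' : (π U).leadingCoeff ≠ 0 := Polynomial.leadingCoeff_ne_zero.2 hne.1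
    have hV' : (π V).leadingCoeff ≠ 0 := Polynomial.leadingCoeff_ne_zero.2 hne.2
    simp only [Polynomial.leadingCoeff, π, RingHom.comp_apply, Polynomial.coe_mapRingHom,
      Polynomial.coeff_map] at hU' hV' ⊢
    rw [← map_mul]
    rw [Ne, Ideal.Quotient.eq_zero_iff_mem] at hU' hV' ⊢
    intro hmem
    rcases hprime _ _ ((totalDegree_coeff_swapHom_le _ _).trans hU)
      ((totalDegree_coeff_swapHom_le _ _).trans hV) hmem with h' | h'
    · exact hU' h'
    · exact hV' h'
  have hcπ : π (MvPolynomial.C c) = c.map ((Ideal.Quotient.mk I).comp MvPolynomial.C) := by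
    simp [π, swapHom_C, Polynomial.map_map]
  rw [map_mul, map_mul] at h
  have hunit : IsUnit (π (MvPolynomial.C c)).leadingCoeff := by
    rw [hcπ, Polynomial.leadingCoeff_map]
    exact (isUnit_iff_ne_zero.2 (Polynomial.leadingCoeff_ne_zero.2 hc)).map _
  have hUV : (π U * π V).leadingCoeff ≠ 0 := by
    rwa [Polynomial.leadingCoeff_mul' hlead]
  have hall : (π (MvPolynomial.C c)).leadingCoeff * (π U * π V).leadingCoeff ≠ 0 := by
    intro h0
    exact hUV (hunit.mul_right_eq_zero.1 h0)
  rw [← Polynomial.leadingCoeff_mul' hall, h] at hall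
  simp at hall

variable (K : Type*) [Field K] [Algebra (Polynomial k) K]

lemma map_ratFunc_eq (I : Ideal (MvPolynomial τ k)) :
    I.map (MvPolynomial.map ((algebraMap (Polynomial k) K).comp Polynomial.C)) =
      (I.map (MvPolynomial.map Polynomial.C)).map (MvPolynomial.map (algebraMap (Polynomial k) K)) := by
  rw [Ideal.map_map]
  congr 1
  ext <;> simp

variable [IsFractionRing (Polynomial k) K]

/-- The ideal `I` is contracted from its extension to `k(t)[x]`. -/
lemma mem_of_map_mem (I : Ideal (MvPolynomial τ k)) (g : MvPolynomial τ k)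
    (h : MvPolynomial.map ((algebraMap (Polynomial k) K).comp Polynomial.C) g ∈
      I.map (MvPolynomial.map ((algebraMap (Polynomial k) K).comp Polynomial.C))) : g ∈ I := by
  rw [map_ratFunc_eq, ← MvPolynomial.map_map, map_mem_map_iff] at h
  obtain ⟨c, hc, h⟩ := h
  rw [mem_map_map_C_iff] at h
  have h1 := h c.natDegree
  rw [map_mul, swapHom_C, swapHom_map, Polynomial.coeff_mul_C, Polynomial.coeff_map] at h1
  refine (Ideal.unit_mul_mem_iff_mem I ?_).1 h1
  exact (isUnit_iff_ne_zero.2 (Polynomial.leadingCoeff_ne_zero.2 hc)).map MvPolynomial.C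

lemma totalDegree_map_of_injective {A B : Type*} [CommRing A] [CommRing B] (φ : A →+* B)
    (hφ : Function.Injective φ) (P : MvPolynomial τ A) :
    (MvPolynomial.map φ P).totalDegree = P.totalDegree := by
  rw [MvPolynomial.totalDegree, MvPolynomial.totalDegree, MvPolynomial.support_map_of_injective _ hφ]

/-- Being prime up to `M` is preserved by the extension of scalars from `k` to `k(t)`. -/
lemma prime_up_to_map (I : Ideal (MvPolynomial τ k)) {M : ℕ} (hI : I ≠ ⊤)
    (hprime : ∀ u v : MvPolynomial τ k, u.totalDegree ≤ M → v.totalDegree ≤ M →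
      u * v ∈ I → u ∈ I ∨ v ∈ I)
    (u v : MvPolynomial τ K) (hu : u.totalDegree ≤ M) (hv : v.totalDegree ≤ M)
    (h : u * v ∈ I.map (MvPolynomial.map ((algebraMap (Polynomial k) K).comp Polynomial.C))) :
    u ∈ I.map (MvPolynomial.map ((algebraMap (Polynomial k) K).comp Polynomial.C)) ∨
      v ∈ I.map (MvPolynomial.map ((algebraMap (Polynomial k) K).comp Polynomial.C)) := by
  rw [map_ratFunc_eq] at h ⊢
  obtain ⟨a, U, ha, hU⟩ := exists_C_mul_eq_map (A := Polynomial k) u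
  obtain ⟨b, V, hb, hV⟩ := exists_C_mul_eq_map (A := Polynomial k) v
  have hinj := IsFractionRing.injective (Polynomial k) K
  have hunit : ∀ c : Polynomial k, c ≠ 0 →
      IsUnit (MvPolynomial.C (algebraMap (Polynomial k) K c) : MvPolynomial τ K) := by
    intro c hc
    refine IsUnit.map _ (isUnit_iff_ne_zero.2 ?_)
    rwa [Ne, map_eq_zero_iff _ hinj]
  have hdeg : ∀ (c : Polynomial k) (w : MvPolynomial τ K) (W : MvPolynomial τ (Polynomial k)),
      MvPolynomial.C (algebraMap (Polynomial k) K c) * w =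
        MvPolynomial.map (algebraMap (Polynomial k) K) W → W.totalDegree ≤ w.totalDegree := by
    intro c w W hW
    rw [← totalDegree_map_of_injective _ hinj, ← hW]
    refine (MvPolynomial.totalDegree_mul _ _).trans ?_
    simp
  have hUV : MvPolynomial.map (algebraMap (Polynomial k) K) (U * V) ∈
      (I.map (MvPolynomial.map Polynomial.C)).map
        (MvPolynomial.map (algebraMap (Polynomial k) K)) := by
    rw [map_mul, ← hU, ← hV, mul_mul_mul_comm]
    exact Ideal.mul_mem_left _ _ h
  rw [map_mem_map_iff] at hUV
  obtain ⟨c, hc, hcUV⟩ := hUV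
  rcases mem_or_mem_of_C_mul_mem I hI hprime U V ((hdeg _ _ _ hU).trans hu)
    ((hdeg _ _ _ hV).trans hv) c hc hcUV with h' | h'
  · left
    have := Ideal.mem_map_of_mem (MvPolynomial.map (algebraMap (Polynomial k) K)) h'
    rw [← hU] at this
    exact (Ideal.unit_mul_mem_iff_mem _ (hunit a ha)).1 this
  · right
    have := Ideal.mem_map_of_mem (MvPolynomial.map (algebraMap (Polynomial k) K)) h'
    rw [← hV] at this
    exact (Ideal.unit_mul_mem_iff_mem _ (hunit b hb)).1 this

end Transcendental

end PrimeBound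

/-! ### The theorem -/

/-- If a proper ideal of `k[x₁,…,xₙ]` generated in degree at most `d`
is prime up to `max{(2d)^(2^(3n²+2n)), (2nd)^(n(n+1)²·2^(4n+6))}`, then it is prime. -/
theorem prime_up_to_bound_implies_prime
    (k : Type*) [Field k] (n d : ℕ) (hn : 1 ≤ n) (hd : 1 ≤ d)
    (I : Ideal (MvPolynomial (Fin n) k)) (hproper : I ≠ ⊤)
    (S : Set (MvPolynomial (Fin n) k)) (hgen : I = Ideal.span S)
    (hdeg : ∀ f ∈ S, f.totalDegree ≤ d)
    (hprime : ∀ f g : MvPolynomial (Fin n) k,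
      f.totalDegree ≤ max ((2 * d) ^ 2 ^ (3 * n ^ 2 + 2 * n))
          ((2 * n * d) ^ (n * (n + 1) ^ 2 * 2 ^ (4 * n + 6))) →
      g.totalDegree ≤ max ((2 * d) ^ 2 ^ (3 * n ^ 2 + 2 * n))
          ((2 * n * d) ^ (n * (n + 1) ^ 2 * 2 ^ (4 * n + 6))) →
      f * g ∈ I → f ∈ I ∨ g ∈ I) :
    I.IsPrime := by
  classical
  -- pass to the infinite field `k(t)`
  let K := FractionRing (Polynomial k)
  have : Infinite K := Infinite.of_injective _ (IsFractionRing.injective (Polynomial k) K)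
  let ι : k →+* K := (algebraMap (Polynomial k) K).comp Polynomial.C
  -- finitely many of the given generators suffice
  obtain ⟨T, hTS, hT⟩ := (Submodule.fg_span_iff_fg_span_finset_subset S).1
    (IsNoetherian.noetherian (Ideal.span S))
  let f : Fin T.card → MvPolynomial (Fin n) k := fun i => (T.equivFin.symm i).1
  have hrange : Set.range f = (T : Set (MvPolynomial (Fin n) k)) := by
    ext z
    constructor
    · rintro ⟨i, rfl⟩
      exact (T.equivFin.symm i).2
    · intro hz
      exact ⟨T.equivFin ⟨z, hz⟩, by simp [f]⟩
  have hIf : I = Ideal.span (Set.range f) := by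
    rw [hrange, hgen]
    exact hT
  have hmap : Ideal.span (Set.range fun i => MvPolynomial.map ι (f i)) =
      I.map (MvPolynomial.map ι) := by
    rw [hIf, Ideal.map_span, ← Set.range_comp]
    rfl
  have hback : ∀ g, MvPolynomial.map ι g ∈ I.map (MvPolynomial.map ι) → g ∈ I :=
    PrimeBound.mem_of_map_mem K I
  have hprime' : (I.map (MvPolynomial.map ι)).IsPrime := by
    rw [← hmap]
    refine PrimeBound.isPrime_of_infinite hd rfl rfl rfl rfl rfl
      ((PrimeBound.bound_arith hn hd rfl rfl rfl rfl rfl).trans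
        (le_max_right ((2 * d) ^ 2 ^ (3 * n ^ 2 + 2 * n)) _)) _
      (fun i => ?_) ?_ ?_
    · rw [PrimeBound.totalDegree_map_of_injective ι ι.injective]
      exact hdeg _ (hTS (T.equivFin.symm i).2)
    · rw [hmap]
      intro htop
      refine hproper ((Ideal.eq_top_iff_one I).2 (hback 1 ?_))
      rw [htop]
      trivial
    · rw [hmap]
      exact PrimeBound.prime_up_to_map K I hproper hprime
  have hcomap : I = (I.map (MvPolynomial.map ι)).comap (MvPolynomial.map ι) :=
    le_antisymm Ideal.le_comap_map hback
  rw [hcomap]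
  exact hprime'.comap _
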